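/- Let (X, σ_X) and (Y, σ_Y) be one-sided subshifts with Y a factor of X via a one-block factor map π, let a = (a_1, a_2) with a_1 > 0 and a_2 ≥ 0, and let Φ = (log φ_n)_{n=1}^∞ ∈ C_sa(X, σ_X) be generated by a sub-multiplicative φ : L(X) → [0,∞). Define φ^{(2)} : L(Y) → [0,∞) by φ^{(2)}(J) = ( Σ_{I ∈ L_n(X), πI = J} φ(I)^{1/a_1} )^{a_1} for J ∈ L_n(Y), and let Φ^{(2)} ∈ C_sa(Y, σ_Y) be generated by φ^{(2)}. Then μ ∈ I(Φ, a) if and only if μ ∘ π^{-1} ∈ I( (1/(a_1+a_2)) Φ^{(2)} ) and μ ∈ I_{μ∘π^{-1}}( (1/a_1) Φ ), where for c > 0, cΦ denotes the potential (log φ_n^c)_{n=1}^∞. -/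

import Mathlib

open MeasureTheory Filter Topology
open scoped Classical ENNReal NNReal

noncomputable section

/-- The left shift on one-sided sequences. -/
def shiftMap {A : Type} : (ℕ → A) → (ℕ → A) := fun x n => x (n + 1)

/-- The cylinder set of a finite word. -/
def cyl {A : Type} (I : List A) : Set (ℕ → A) :=
  {x | ∀ i : Fin I.length, x i = I.get i}

/-- Membership of a word in the language of `X`. -/
def Lang {A : Type} (X : Set (ℕ → A)) (I : List A) : Prop :=
  (cyl I ∩ X).Nonempty

/-- `X` is a (nonempty) one-sided subshift. -/
def IsSubshift {A : Type} [TopologicalSpace A] (X : Set (ℕ → A)) : Prop :=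
  X.Nonempty ∧ IsCompact X ∧ shiftMap '' X ⊆ X

/-- weak `p`-specification -/
def WeakSpecification {A : Type} (X : Set (ℕ → A)) (p : ℕ) : Prop :=
  ∀ I J : List A, Lang X I → Lang X J →
    ∃ K : List A, K.length ≤ p ∧ Lang X (I ++ K ++ J)

/-- `p`-specification -/
def Specification {A : Type} (X : Set (ℕ → A)) (p : ℕ) : Prop :=
  ∀ I J : List A, Lang X I → Lang X J →
    ∃ K : List A, K.length = p ∧ Lang X (I ++ K ++ J)

/-- invariant probability measures supported on `X` (predicate on plain measures) -/
def InvOn {A : Type} [MeasurableSpace A] (X : Set (ℕ → A)) (μ : Measure (ℕ → A)) : Prop :=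
  IsProbabilityMeasure μ ∧ μ.map shiftMap = μ ∧ μ X = 1

/-- the set of shift-invariant probability measures on `X` -/
def MInv {A : Type} [MeasurableSpace A] (X : Set (ℕ → A)) :
    Set (ProbabilityMeasure (ℕ → A)) :=
  {μ | (μ : Measure (ℕ → A)).map shiftMap = (μ : Measure (ℕ → A)) ∧
    (μ : Measure (ℕ → A)) X = 1}

/-- measure of a word: `μ([I] ∩ X)` -/
def mw {A : Type} [MeasurableSpace A] (X : Set (ℕ → A)) (μ : Measure (ℕ → A))
    (I : List A) : ℝ :=
  (μ (cyl I ∩ X)).toReal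

/-- the initial word of length `n` of a sequence -/
def wordOf {A : Type} (x : ℕ → A) (n : ℕ) : List A := List.ofFn (fun i : Fin n => x i)

/-- `n`-block entropy -/
def Hblock {A : Type} [Fintype A] [MeasurableSpace A] (X : Set (ℕ → A))
    (μ : Measure (ℕ → A)) (n : ℕ) : ℝ :=
  -∑ w : Fin n → A, mw X μ (List.ofFn w) * Real.log (mw X μ (List.ofFn w))

/-- measure-theoretic entropy (the limit exists for invariant measures; `liminf` realizes it) -/
def ent {A : Type} [Fintype A] [MeasurableSpace A] (X : Set (ℕ → A))
    (μ : Measure (ℕ → A)) : ℝ :=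
  liminf (fun n : ℕ => Hblock X μ n / n) atTop

/-- extended logarithm: `log t`, with value `⊥` for `t ≤ 0` -/
def elog (t : ℝ) : EReal := if t ≤ 0 then ⊥ else ((Real.log t : ℝ) : EReal)

/-- the integral `∫ log g dμ`, valued in `ℝ ∪ {−∞}` -/
def intlog {Ω : Type*} [MeasurableSpace Ω] (μ : Measure Ω) (g : Ω → ℝ) : EReal :=
  ((∫⁻ x, ENNReal.ofReal (Real.log (g x)) ∂μ : ℝ≥0∞) : EReal) -
    ((∫⁻ x, (if g x ≤ 0 then (⊤ : ℝ≥0∞) else ENNReal.ofReal (-Real.log (g x))) ∂μ : ℝ≥0∞) : EReal)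

/-- sub-additive potential `Φ = (log φ_n)_{n ≥ 1}` -/
def SubaddPot {A : Type} [TopologicalSpace A] (X : Set (ℕ → A))
    (φ : ℕ → (ℕ → A) → ℝ) : Prop :=
  (∀ n, 1 ≤ n → ContinuousOn (φ n) X) ∧
  (∀ n, 1 ≤ n → ∀ x ∈ X, 0 ≤ φ n x) ∧
  ∃ c > (0:ℝ), ∀ n m : ℕ, 1 ≤ n → 1 ≤ m → ∀ x ∈ X,
    φ (n + m) x ≤ c * φ n x * φ m (shiftMap^[n] x)

/-- `Φ_*(μ) = lim (1/n) ∫ log φ_n dμ` (realized as a `liminf` in `EReal`) -/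
def PhiStar {A : Type} [MeasurableSpace A] (μ : Measure (ℕ → A))
    (φ : ℕ → (ℕ → A) → ℝ) : EReal :=
  liminf (fun n : ℕ => (((n : ℝ)⁻¹ : ℝ) : EReal) * intlog μ (φ n)) atTop

/-- sub-multiplicative function on the language of `X` -/
def Submult {A : Type} (X : Set (ℕ → A)) (φ : List A → ℝ) : Prop :=
  (∀ I, Lang X I → 0 ≤ φ I) ∧ φ [] = 1 ∧
  ∃ c > (0:ℝ), ∀ I J : List A, Lang X (I ++ J) → φ (I ++ J) ≤ c⁻¹ * φ I * φ J

/-- the potential generated by a word function -/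
def genPot {A : Type} (φ : List A → ℝ) : ℕ → (ℕ → A) → ℝ := fun n x => φ (wordOf x n)

/-- the scaled potential `cΦ = (log φ_n^c)` -/
def scPot {Ω : Type*} (c : ℝ) (φ : ℕ → Ω → ℝ) : ℕ → Ω → ℝ := fun n x => φ n x ^ c

/-- the "pressure value" `Φ_*(μ) + h_μ` -/
def eqVal {A : Type} [Fintype A] [MeasurableSpace A] (X : Set (ℕ → A))
    (φ : ℕ → (ℕ → A) → ℝ) (μ : ProbabilityMeasure (ℕ → A)) : EReal :=
  PhiStar (μ : Measure (ℕ → A)) φ + ((ent X (μ : Measure (ℕ → A)) : ℝ) : EReal)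

/-- the set of equilibrium states of `Φ` -/
def EqSet {A : Type} [Fintype A] [MeasurableSpace A] (X : Set (ℕ → A))
    (φ : ℕ → (ℕ → A) → ℝ) : Set (ProbabilityMeasure (ℕ → A)) :=
  {μ | μ ∈ MInv X ∧ eqVal X φ μ = ⨆ η ∈ MInv X, eqVal X φ η}

/-- sequence map induced by a one-block map -/
def blockMap {A B : Type} (π : A → B) : (ℕ → A) → (ℕ → B) := fun x n => π (x n)

/-- pushforward of a probability measure under a one-block map -/
def pushM {A B : Type} [MeasurableSpace A] [MeasurableSpace B] (π : A → B)
    (μ : ProbabilityMeasure (ℕ → A)) : Measure (ℕ → B) :=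
  (μ : Measure (ℕ → A)).map (blockMap π)

/-- conditional equilibrium states of `Φ` over `ν` -/
def CondEqSet {A B : Type} [Fintype A] [MeasurableSpace A] [MeasurableSpace B]
    (X : Set (ℕ → A)) (π : A → B) (φ : ℕ → (ℕ → A) → ℝ) (ν : Measure (ℕ → B)) :
    Set (ProbabilityMeasure (ℕ → A)) :=
  {μ | μ ∈ MInv X ∧ pushM π μ = ν ∧
    eqVal X φ μ = ⨆ η ∈ {η | η ∈ MInv X ∧ pushM π η = ν}, eqVal X φ η}

/-- the projected word function `ψ(J) = Σ_{I : πI = J} φ(I)` -/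
def psiProj {A B : Type} [Fintype A] (X : Set (ℕ → A)) (π : A → B) (φ : List A → ℝ)
    (J : List B) : ℝ :=
  ∑ w : Fin J.length → A,
    if Lang X (List.ofFn w) ∧ List.map π (List.ofFn w) = J then φ (List.ofFn w) else 0

/-- `φ^{(2)}(J) = (Σ_{I : πI = J} φ(I)^{1/a₁})^{a₁}` -/
def phiTwo {A B : Type} [Fintype A] (X : Set (ℕ → A)) (π : A → B) (φ : List A → ℝ)
    (a₁ : ℝ) (J : List B) : ℝ :=
  (∑ w : Fin J.length → A,
    if Lang X (List.ofFn w) ∧ List.map π (List.ofFn w) = J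
    then φ (List.ofFn w) ^ a₁⁻¹ else 0) ^ a₁

/-- `a`-weighted pressure value for `k = 2` -/
def wVal2 {A B : Type} [Fintype A] [Fintype B] [MeasurableSpace A] [MeasurableSpace B]
    (X : Set (ℕ → A)) (Y : Set (ℕ → B)) (π : A → B) (φ : ℕ → (ℕ → A) → ℝ)
    (a₁ a₂ : ℝ) (μ : ProbabilityMeasure (ℕ → A)) : EReal :=
  PhiStar (μ : Measure (ℕ → A)) φ +
    ((a₁ * ent X (μ : Measure (ℕ → A)) + a₂ * ent Y (pushM π μ) : ℝ) : EReal)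

/-- the set of `a`-weighted equilibrium states, `k = 2` -/
def WEqSet2 {A B : Type} [Fintype A] [Fintype B] [MeasurableSpace A] [MeasurableSpace B]
    (X : Set (ℕ → A)) (Y : Set (ℕ → B)) (π : A → B) (φ : ℕ → (ℕ → A) → ℝ)
    (a₁ a₂ : ℝ) : Set (ProbabilityMeasure (ℕ → A)) :=
  {μ | μ ∈ MInv X ∧ wVal2 X Y π φ a₁ a₂ μ = ⨆ η ∈ MInv X, wVal2 X Y π φ a₁ a₂ η}

/-- convexity of a set of probability measures -/
def ConvexPM {Ω : Type*} [MeasurableSpace Ω] (S : Set (ProbabilityMeasure Ω)) : Prop :=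
  ∀ μ₁ ∈ S, ∀ μ₂ ∈ S, ∀ t : ℝ, 0 ≤ t → t ≤ 1 → ∀ μ : ProbabilityMeasure Ω,
    (μ : Measure Ω) = ENNReal.ofReal t • (μ₁ : Measure Ω) +
      ENNReal.ofReal (1 - t) • (μ₂ : Measure Ω) → μ ∈ S

/-- extreme points of a set of probability measures -/
def IsExtremePM {Ω : Type*} [MeasurableSpace Ω] (S : Set (ProbabilityMeasure Ω))
    (μ : ProbabilityMeasure Ω) : Prop :=
  μ ∈ S ∧ ∀ μ₁ ∈ S, ∀ μ₂ ∈ S, ∀ t : ℝ, 0 < t → t < 1 →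
    (μ : Measure Ω) = ENNReal.ofReal t • (μ₁ : Measure Ω) +
      ENNReal.ofReal (1 - t) • (μ₂ : Measure Ω) → μ₁ = μ₂

/-- the class `Ω_w(A*, p)` -/
def OmegaW {A : Type} [Fintype A] (p : ℕ) (f : List A → ℝ) : Prop :=
  (∀ I, 0 ≤ f I ∧ f I ≤ 1) ∧
  ∃ c > (0:ℝ),
    (∀ n : ℕ, ∑ w : Fin n → A, f (List.ofFn w) = 1) ∧
    (∀ I J : List A, ∃ K : List A, K.length ≤ p ∧ c * (f I * f J) ≤ f (I ++ K ++ J)) ∧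
    (∀ I : List A, ∃ i j : A, c * f I ≤ f (i :: I) ∧ c * f I ≤ f (I ++ [j]))

/-- the class `Ω(A*, p)` -/
def OmegaS {A : Type} [Fintype A] (p : ℕ) (f : List A → ℝ) : Prop :=
  (∀ I, 0 ≤ f I ∧ f I ≤ 1) ∧
  ∃ c > (0:ℝ),
    (∀ n : ℕ, ∑ w : Fin n → A, f (List.ofFn w) = 1) ∧
    (∀ I J : List A, ∃ K : List A, K.length = p ∧ c * (f I * f J) ≤ f (I ++ K ++ J))

/-- `f_{m,n}(I)` -/
def fmn {A : Type} [Fintype A] (f : List A → ℝ) (m n : ℕ) (I : List A) : ℝ :=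
  ∑ u : Fin m → A, ∑ v : Fin n → A, f (List.ofFn u ++ I ++ List.ofFn v)

/-- `f*(I) = sup_{m,n} f_{m,n}(I)` -/
def fstar {A : Type} [Fintype A] (f : List A → ℝ) (I : List A) : ℝ :=
  ⨆ m : ℕ, ⨆ n : ℕ, fmn f m n I

/-- the class `D_w(X, p)` -/
def Dw {A : Type} (X : Set (ℕ → A)) (p : ℕ) (φ : List A → ℝ) : Prop :=
  (∀ I, Lang X I → 0 ≤ φ I) ∧ (∃ I, Lang X I ∧ I ≠ [] ∧ 0 < φ I) ∧
  ∃ c : ℝ, 0 < c ∧ c ≤ 1 ∧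
    (∀ I J : List A, Lang X (I ++ J) → φ (I ++ J) ≤ c⁻¹ * φ I * φ J) ∧
    (∀ I J : List A, Lang X I → Lang X J →
      ∃ K : List A, K.length ≤ p ∧ Lang X (I ++ K ++ J) ∧
        c * (φ I * φ J) ≤ φ (I ++ K ++ J))

/-- the class `D(X, p)` -/
def Ds {A : Type} (X : Set (ℕ → A)) (p : ℕ) (φ : List A → ℝ) : Prop :=
  (∀ I, Lang X I → 0 ≤ φ I) ∧ (∃ I, Lang X I ∧ I ≠ [] ∧ 0 < φ I) ∧
  ∃ c : ℝ, 0 < c ∧ c ≤ 1 ∧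
    (∀ I J : List A, Lang X (I ++ J) → φ (I ++ J) ≤ c⁻¹ * φ I * φ J) ∧
    (∀ I J : List A, Lang X I → Lang X J →
      ∃ K : List A, K.length = p ∧ Lang X (I ++ K ++ J) ∧
        c * (φ I * φ J) ≤ φ (I ++ K ++ J))

end

noncomputable section

/-- iterated one-block maps along a chain of alphabets: `tauFrom π j i : B j → B (j+i)` -/
def tauFrom {B : ℕ → Type} (π : ∀ i, B i → B (i+1)) (j : ℕ) : (i : ℕ) → B j → B (j + i)
  | 0 => id
  | (i+1) => fun a => π (j + i) (tauFrom π j i a)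

/-- weighted pressure value along a chain starting at index `j`, with `k` weights `w 0, …, w (k-1)` -/
def wValGen {B : ℕ → Type} [∀ i, Fintype (B i)] [∀ i, MeasurableSpace (B i)]
    (π : ∀ i, B i → B (i+1)) (X : ∀ i, Set (ℕ → B i)) (j k : ℕ) (w : ℕ → ℝ)
    (φ : ℕ → (ℕ → B j) → ℝ) (μ : ProbabilityMeasure (ℕ → B j)) : EReal :=
  PhiStar (μ : Measure (ℕ → B j)) φ +
    ((∑ i ∈ Finset.range k, w i *
      ent (X (j + i)) ((μ : Measure (ℕ → B j)).map (blockMap (tauFrom π j i))) : ℝ) : EReal)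

/-- weighted equilibrium states along a chain -/
def wEqSetGen {B : ℕ → Type} [∀ i, Fintype (B i)] [∀ i, MeasurableSpace (B i)]
    (π : ∀ i, B i → B (i+1)) (X : ∀ i, Set (ℕ → B i)) (j k : ℕ) (w : ℕ → ℝ)
    (φ : ℕ → (ℕ → B j) → ℝ) : Set (ProbabilityMeasure (ℕ → B j)) :=
  {μ | μ ∈ MInv (X j) ∧
    wValGen π X j k w φ μ = ⨆ η ∈ MInv (X j), wValGen π X j k w φ η}

end

/-!
For `ν` invariant on `Y` and `ψ J = ∑ φ I ^ (1 / a₁)`, summed over `π I = J`, the relative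
variational principle identifies the pressure value of `ψ` at `ν` with the supremum of the pressure
values of `(1 / a₁) Φ` over the invariant measures on `X` above `ν`. As `φ^{(2)} = ψ ^ a₁`, applying
an increasing affine bijection to both sides shows that `a₁ + a₂` times the pressure value of
`(1 / (a₁ + a₂)) Φ^{(2)}` at `ν` is the supremum of the `a`-weighted pressure values over the same
fibre. Maximising the weighted value over all measures is therefore maximising it on each fibre and
then over the base.

In the relative variational principle, one inequality is Gibbs' inequality for words of length `n`.
For the other, distribute the `ν`-mass of each word `J` of length `l! + l` over the words `I` with
`π I = J` in proportion to `φ I`, average the resulting measure over its first `l!` translates and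
take a weak limit. Subadditivity of the block pressure compares the long words with the words of a
fixed length `m`, which divides `l!`.
-/
section Words

variable {A B : Type}

lemma length_wordOf (x : ℕ → A) (n : ℕ) : (wordOf x n).length = n := by simp [wordOf]

lemma mem_cyl_iff {x : ℕ → A} {I : List A} : x ∈ cyl I ↔ wordOf x I.length = I := by
  rw [List.ext_get_iff]
  simp only [wordOf, List.length_ofFn, List.get_ofFn, cyl, Set.mem_ofPred_eq, true_and]
  exact ⟨fun h n _ h₂ => h ⟨n, h₂⟩, fun h i => h i i.2 i.2⟩

lemma wordOf_eq_ofFn_iff {x : ℕ → A} {n : ℕ} {w : Fin n → A} :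
    wordOf x n = List.ofFn w ↔ (fun i : Fin n => x i) = w :=
  List.ofFn_injective.eq_iff

lemma mem_cyl_ofFn_iff {x : ℕ → A} {n : ℕ} {w : Fin n → A} :
    x ∈ cyl (List.ofFn w) ↔ wordOf x n = List.ofFn w := by
  rw [mem_cyl_iff, List.length_ofFn]

lemma mem_cyl_wordOf (x : ℕ → A) (n : ℕ) : x ∈ cyl (wordOf x n) :=
  mem_cyl_iff.2 (by rw [length_wordOf])

lemma iterate_shiftMap_apply (k : ℕ) (x : ℕ → A) (i : ℕ) : shiftMap^[k] x i = x (k + i) := by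
  induction k generalizing x with
  | zero => simp
  | succ k ih =>
    rw [Function.iterate_succ_apply, ih]
    exact congrArg x (by omega)

lemma wordOf_add (x : ℕ → A) (a b : ℕ) :
    wordOf x (a + b) = wordOf x a ++ wordOf (shiftMap^[a] x) b := by
  simp only [wordOf, ← List.ofFn_fin_append]
  congr 1
  funext i
  refine Fin.addCases (fun j => ?_) (fun j => ?_) i <;> simp [iterate_shiftMap_apply]

lemma take_wordOf_add (x : ℕ → A) (a b : ℕ) : (wordOf x (a + b)).take a = wordOf x a := by
  rw [wordOf_add, List.take_left' (length_wordOf x a)]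

lemma drop_wordOf_add (x : ℕ → A) (a b : ℕ) :
    (wordOf x (a + b)).drop a = wordOf (shiftMap^[a] x) b := by
  rw [wordOf_add, List.drop_left' (length_wordOf x a)]

lemma blockMap_iterate_shiftMap (π : A → B) (k : ℕ) (x : ℕ → A) :
    blockMap π (shiftMap^[k] x) = shiftMap^[k] (blockMap π x) := by
  funext i
  simp only [blockMap, iterate_shiftMap_apply]

lemma wordOf_blockMap (π : A → B) (x : ℕ → A) (n : ℕ) :
    wordOf (blockMap π x) n = (wordOf x n).map π := by
  simp only [wordOf, List.map_ofFn]
  rfl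

lemma lang_wordOf {X : Set (ℕ → A)} {x : ℕ → A} (hx : x ∈ X) (n : ℕ) : Lang X (wordOf x n) :=
  ⟨x, mem_cyl_wordOf x n, hx⟩

lemma Lang.of_append_left {X : Set (ℕ → A)} {I J : List A} (h : Lang X (I ++ J)) : Lang X I := by
  obtain ⟨x, hx, hxX⟩ := h
  rw [mem_cyl_iff, List.length_append, wordOf_add] at hx
  exact ⟨x, mem_cyl_iff.2 (List.append_inj hx (length_wordOf ..)).1, hxX⟩

lemma Lang.of_append_right {X : Set (ℕ → A)} (hX : Set.MapsTo shiftMap X X) {I J : List A}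
    (h : Lang X (I ++ J)) : Lang X J := by
  obtain ⟨x, hx, hxX⟩ := h
  rw [mem_cyl_iff, List.length_append, wordOf_add] at hx
  exact ⟨_, mem_cyl_iff.2 (List.append_inj hx (length_wordOf ..)).2, hX.iterate _ hxX⟩

lemma exists_mem_cyl_ofFn {n : ℕ} (hn : n ≠ 0) (w : Fin n → A) : (cyl (List.ofFn w)).Nonempty := by
  refine ⟨fun i => if h : i < n then w ⟨i, h⟩ else w ⟨0, Nat.pos_of_ne_zero hn⟩, ?_⟩
  rw [mem_cyl_ofFn_iff, wordOf_eq_ofFn_iff]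
  funext i
  simp

lemma sum_ofFn_add {M : Type*} [AddCommMonoid M] [Fintype A] (a b : ℕ) (f : List A → List A → M) :
    ∑ w : Fin (a + b) → A, f ((List.ofFn w).take a) ((List.ofFn w).drop a) =
      ∑ u : Fin a → A, ∑ v : Fin b → A, f (List.ofFn u) (List.ofFn v) := by
  rw [← Fintype.sum_prod_type', ← (Fin.appendEquiv a b).sum_comp]
  refine Finset.sum_congr rfl fun p _ => ?_
  simp [Fin.appendEquiv, List.ofFn_fin_append]

lemma exists_abs_comp_wordOf_le [Finite A] (F : List A → ℝ) (n : ℕ) :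
    ∃ C, ∀ x : ℕ → A, |F (wordOf x n)| ≤ C :=
  let ⟨C, hC⟩ := (Set.finite_range fun w : Fin n → A => |F (List.ofFn w)|).bddAbove
  ⟨C, fun _ => hC ⟨_, rfl⟩⟩

end Words

section WordStatistics

variable {A B : Type} [MeasurableSpace A] [MeasurableSpace B]

lemma measurable_shiftMap : Measurable (shiftMap : (ℕ → A) → ℕ → A) :=
  measurable_pi_lambda _ fun n => measurable_pi_apply (n + 1)

lemma measurable_iterate_shiftMap (k : ℕ) : Measurable (shiftMap^[k] : (ℕ → A) → ℕ → A) :=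
  measurable_shiftMap.iterate k

lemma measurable_blockMap {π : A → B} (hπ : Measurable π) : Measurable (blockMap π) :=
  measurable_pi_lambda _ fun n => hπ.comp (measurable_pi_apply n)

lemma map_iterate_shiftMap {μ : Measure (ℕ → A)} (hμ : μ.map shiftMap = μ) (k : ℕ) :
    μ.map shiftMap^[k] = μ := by
  induction k with
  | zero => exact Measure.map_id
  | succ k ih =>
    rw [Function.iterate_succ', ← Measure.map_map measurable_shiftMap
      (measurable_iterate_shiftMap k), ih, hμ]

lemma ae_measureReal_cyl_wordOf_pos [Finite A] (μ : Measure (ℕ → A)) [IsFiniteMeasure μ] (n : ℕ) :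
    ∀ᵐ x ∂μ, 0 < μ.real (cyl (wordOf x n)) := by
  have h (w : Fin n → A) :
      ∀ᵐ x ∂μ, wordOf x n = List.ofFn w → 0 < μ.real (cyl (List.ofFn w)) := by
    rcases (measureReal_nonneg (μ := μ) (s := cyl (List.ofFn w))).eq_or_lt with h0 | h0
    · have : ∀ᵐ x ∂μ, x ∉ cyl (List.ofFn w) :=
        measure_eq_zero_iff_ae_notMem.1 ((measureReal_eq_zero_iff).1 h0.symm)
      filter_upwards [this] with x hx hw
      exact absurd (mem_cyl_ofFn_iff.2 hw) hx
    · exact .of_forall fun _ _ => h0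
  filter_upwards [ae_all_iff.2 h] with x hx using hx _ rfl

variable [Finite A] [MeasurableSingletonClass A]

lemma measurable_comp_wordOf {E : Type*} [MeasurableSpace E] (F : List A → E) (n : ℕ) :
    Measurable fun x : ℕ → A => F (wordOf x n) :=
  (Measurable.of_discrete (f := fun w : Fin n → A => F (List.ofFn w))).comp
    (measurable_pi_lambda _ fun i => measurable_pi_apply (i : ℕ))

lemma measurableSet_wordOf (S : Set (List A)) (n : ℕ) :
    MeasurableSet {x : ℕ → A | wordOf x n ∈ S} :=
  measurableSet_setOfPred.2 (measurable_comp_wordOf (· ∈ S) n)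

lemma measurableSet_cyl (I : List A) : MeasurableSet (cyl I) := by
  convert measurableSet_wordOf {I} I.length using 1
  exact Set.ext fun _ => mem_cyl_iff

lemma integrable_comp_wordOf (μ : Measure (ℕ → A)) [IsFiniteMeasure μ] (F : List A → ℝ) (n : ℕ) :
    Integrable (fun x => F (wordOf x n)) μ :=
  let ⟨C, hC⟩ := exists_abs_comp_wordOf_le F n
  .of_bound (measurable_comp_wordOf F n).aestronglyMeasurable C (.of_forall hC)

lemma integrable_comp_wordOf_iterate (μ : Measure (ℕ → A)) [IsFiniteMeasure μ] (F : List A → ℝ)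
    (n k : ℕ) : Integrable (fun x => F (wordOf (shiftMap^[k] x) n)) μ :=
  (integrable_comp_wordOf (μ.map shiftMap^[k]) F n).comp_measurable (measurable_iterate_shiftMap k)

lemma integral_comp_wordOf_map_iterate (μ : Measure (ℕ → A)) (F : List A → ℝ) (n k : ℕ) :
    ∫ x, F (wordOf x n) ∂μ.map shiftMap^[k] = ∫ x, F (wordOf (shiftMap^[k] x) n) ∂μ :=
  integral_map (measurable_iterate_shiftMap k).aemeasurable
    (measurable_comp_wordOf F n).aestronglyMeasurable

lemma integral_comp_wordOf_map_blockMap {π : B → A} (hπ : Measurable π) (μ : Measure (ℕ → B))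
    (F : List A → ℝ) (n : ℕ) :
    ∫ y, F (wordOf y n) ∂μ.map (blockMap π) = ∫ x, F (wordOf (blockMap π x) n) ∂μ :=
  integral_map (measurable_blockMap hπ).aemeasurable
    (measurable_comp_wordOf F n).aestronglyMeasurable

lemma measureReal_cyl_eq_integral (μ : Measure (ℕ → A)) {n : ℕ} {I : List A} (hI : I.length = n) :
    μ.real (cyl I) = ∫ x, (if wordOf x n = I then 1 else 0) ∂μ := by
  rw [← integral_indicator_one (measurableSet_cyl I)]
  refine integral_congr_ae (.of_forall fun x => ?_)
  simp only [Set.indicator_apply, mem_cyl_iff, hI, Pi.one_apply]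

lemma eq_of_integral_comp_wordOf_eq {μ ν : Measure (ℕ → A)} [IsFiniteMeasure μ] [IsFiniteMeasure ν]
    (h : ∀ (F : List A → ℝ) n, ∫ x, F (wordOf x n) ∂μ = ∫ x, F (wordOf x n) ∂ν) : μ = ν := by
  have hm n : Measurable fun (x : ℕ → A) (i : Fin n) => x i := by fun_prop
  have hmap n : μ.map (fun x (i : Fin n) => x i) = ν.map fun x (i : Fin n) => x i := by
    refine Measure.ext_of_singleton fun w => ?_
    have hw : (fun x (i : Fin n) => x i) ⁻¹' {w} = cyl (List.ofFn w) :=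
      Set.ext fun x => by rw [mem_cyl_ofFn_iff, wordOf_eq_ofFn_iff]; rfl
    rw [Measure.map_apply (hm n) (.singleton w), Measure.map_apply (hm n) (.singleton w), hw]
    rw [← measureReal_eq_measureReal_iff, measureReal_cyl_eq_integral μ List.length_ofFn,
      measureReal_cyl_eq_integral ν List.length_ofFn]
    exact h (fun I => if I = List.ofFn w then 1 else 0) n
  refine IsProjectiveLimit.unique (P := fun I : Finset ℕ => ν.map I.restrict) (fun I => ?_)
    fun I => rfl
  obtain ⟨n, hn⟩ : ∃ n, ∀ i ∈ I, i < n := ⟨I.sup id + 1, fun i hi =>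
    Nat.lt_succ_of_le (Finset.le_sup (f := id) hi)⟩
  have hI : (I.restrict : (ℕ → A) → I → A) =
      (fun (w : Fin n → A) (i : I) => w ⟨i, hn i i.2⟩) ∘ fun x (i : Fin n) => x i := rfl
  simp only [hI]
  rw [← Measure.map_map (by fun_prop) (hm n), hmap, Measure.map_map (by fun_prop) (hm n)]

lemma mw_eq_measureReal_cyl {X : Set (ℕ → A)} {μ : Measure (ℕ → A)} [IsProbabilityMeasure μ]
    (hμ : μ X = 1) (I : List A) : mw X μ I = μ.real (cyl I) := by
  refine congrArg ENNReal.toReal (le_antisymm (measure_mono Set.inter_subset_left) ?_)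
  have h₁ : μ (cyl I ∩ X) + μ (X \ cyl I) = 1 := by
    rw [Set.inter_comm, measure_inter_add_sdiff X (measurableSet_cyl I), hμ]
  have h₂ : μ (cyl I) + μ (cyl I)ᶜ = 1 := prob_add_prob_compl (measurableSet_cyl I)
  refine ENNReal.le_of_add_le_add_right (measure_ne_top μ (cyl I)ᶜ) ?_
  rw [h₂, ← h₁]
  gcongr
  exact fun x hx => hx.2

end WordStatistics

section WordSums

variable {A : Type} [Fintype A] [MeasurableSpace A] [MeasurableSingletonClass A]

lemma integral_comp_wordOf (μ : Measure (ℕ → A)) [IsFiniteMeasure μ] (F : List A → ℝ) (n : ℕ) :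
    ∫ x, F (wordOf x n) ∂μ = ∑ w : Fin n → A, μ.real (cyl (List.ofFn w)) * F (List.ofFn w) := by
  have h x : F (wordOf x n) =
      ∑ w : Fin n → A, (if wordOf x n = List.ofFn w then 1 else 0) * F (List.ofFn w) := by
    simp only [wordOf_eq_ofFn_iff, ite_mul, one_mul, zero_mul, Finset.sum_ite_eq, Finset.mem_univ,
      if_true]
    rfl
  simp_rw [h]
  rw [integral_finsetSum _ fun w _ =>
    integrable_comp_wordOf μ (fun I => (if I = List.ofFn w then 1 else 0) * F (List.ofFn w)) n]
  refine Finset.sum_congr rfl fun w _ => ?_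
  rw [integral_mul_const, measureReal_cyl_eq_integral μ (List.length_ofFn)]

lemma sum_measureReal_cyl (μ : Measure (ℕ → A)) [IsProbabilityMeasure μ] (n : ℕ) :
    ∑ w : Fin n → A, μ.real (cyl (List.ofFn w)) = 1 := by
  simpa using (integral_comp_wordOf μ (fun _ => 1) n).symm

end WordSums

section BlockEntropy

variable {A : Type} [Fintype A] [MeasurableSpace A]

/-- The Shannon entropy of the distribution of the initial `n`-word under `μ`. It differs from
`Hblock` in not restricting cylinders to a subshift, and is used for non-invariant `μ` too. -/
noncomputable def blockEntropy (μ : Measure (ℕ → A)) (n : ℕ) : ℝ :=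
  ∑ w : Fin n → A, Real.negMulLog (μ.real (cyl (List.ofFn w)))

lemma blockEntropy_nonneg (μ : Measure (ℕ → A)) [IsProbabilityMeasure μ] (n : ℕ) :
    0 ≤ blockEntropy μ n :=
  Finset.sum_nonneg fun _ _ => Real.negMulLog_nonneg measureReal_nonneg measureReal_le_one

variable [MeasurableSingletonClass A]

lemma Hblock_eq_blockEntropy {X : Set (ℕ → A)} {μ : Measure (ℕ → A)} [IsProbabilityMeasure μ]
    (hμ : μ X = 1) (n : ℕ) : Hblock X μ n = blockEntropy μ n := by
  simp only [Hblock, blockEntropy, mw_eq_measureReal_cyl hμ, Real.negMulLog, neg_mul,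
    Finset.sum_neg_distrib]

variable (μ : Measure (ℕ → A))

lemma blockEntropy_eq_neg_integral_log [IsFiniteMeasure μ] (n : ℕ) :
    blockEntropy μ n = -∫ x, Real.log (μ.real (cyl (wordOf x n))) ∂μ := by
  rw [integral_comp_wordOf μ (fun I => Real.log (μ.real (cyl I)))]
  simp only [blockEntropy, Real.negMulLog, neg_mul, Finset.sum_neg_distrib]

variable [IsProbabilityMeasure μ]

/-- Gibbs' inequality. -/
lemma blockEntropy_le_neg_integral_log {r : List A → ℝ} {n : ℕ}
    (hr : ∀ w : Fin n → A, 0 ≤ r (List.ofFn w)) (hsum : ∑ w : Fin n → A, r (List.ofFn w) ≤ 1)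
    (hpos : ∀ᵐ x ∂μ, 0 < r (wordOf x n)) :
    blockEntropy μ n ≤ -∫ x, Real.log (r (wordOf x n)) ∂μ := by
  let p (I : List A) : ℝ := μ.real (cyl I)
  have hlog : ∫ x, (Real.log (r (wordOf x n)) - Real.log (p (wordOf x n))) ∂μ ≤
      ∫ x, (r (wordOf x n) / p (wordOf x n) - 1) ∂μ := by
    refine integral_mono_ae
      (integrable_comp_wordOf μ (fun I => Real.log (r I) - Real.log (p I)) n)
      (integrable_comp_wordOf μ (fun I => r I / p I - 1) n) ?_
    filter_upwards [hpos, ae_measureReal_cyl_wordOf_pos μ n] with x hrx hpx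
    rw [← Real.log_div hrx.ne' hpx.ne']
    exact Real.log_le_sub_one_of_pos (div_pos hrx hpx)
  have hratio : ∫ x, r (wordOf x n) / p (wordOf x n) ∂μ ≤ 1 := by
    rw [integral_comp_wordOf μ (fun I => r I / p I)]
    refine (Finset.sum_le_sum fun w _ => ?_).trans hsum
    rcases (measureReal_nonneg (μ := μ) (s := cyl (List.ofFn w))).eq_or_lt with h | h
    · simpa [← h] using hr w
    · exact (mul_div_cancel₀ _ h.ne').le
  rw [integral_sub (integrable_comp_wordOf μ (fun I => Real.log (r I)) n)
      (integrable_comp_wordOf μ (fun I => Real.log (p I)) n),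
    integral_sub (integrable_comp_wordOf μ (fun I => r I / p I) n) (integrable_const 1),
    integral_const, probReal_univ, one_smul] at hlog
  rw [blockEntropy_eq_neg_integral_log]
  linarith

lemma blockEntropy_le_mul_log_card (n : ℕ) :
    blockEntropy μ n ≤ n * Real.log (Fintype.card A) := by
  have : Nonempty A := (nonempty_of_isProbabilityMeasure μ).map (· 0)
  have hcard : (0 : ℝ) < (Fintype.card A : ℝ)⁻¹ ^ n := by positivity
  have h := blockEntropy_le_neg_integral_log μ (r := fun _ => (Fintype.card A : ℝ)⁻¹ ^ n)
    (n := n) (fun _ => hcard.le) (by simp) (.of_forall fun _ => hcard)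
  simpa using h

lemma blockEntropy_add_le (a b : ℕ) :
    blockEntropy μ (a + b) ≤ blockEntropy μ a + blockEntropy (μ.map shiftMap^[a]) b := by
  set μ' := μ.map shiftMap^[a]
  have hshift := (measurable_iterate_shiftMap (A := A) a).aemeasurable (μ := μ)
  have : IsProbabilityMeasure μ' := Measure.isProbabilityMeasure_map hshift
  have hpos : ∀ᵐ x ∂μ, 0 < μ.real (cyl (wordOf x a)) ∧
      0 < μ'.real (cyl (wordOf (shiftMap^[a] x) b)) :=
    (ae_measureReal_cyl_wordOf_pos μ a).and
      (ae_of_ae_map hshift (ae_measureReal_cyl_wordOf_pos μ' b))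
  refine (blockEntropy_le_neg_integral_log μ
    (r := fun I => μ.real (cyl (I.take a)) * μ'.real (cyl (I.drop a)))
    (fun w => mul_nonneg measureReal_nonneg measureReal_nonneg) ?_ ?_).trans_eq ?_
  · rw [sum_ofFn_add a b fun I J => μ.real (cyl I) * μ'.real (cyl J)]
    simp only [← Finset.mul_sum, sum_measureReal_cyl, mul_one, le_refl]
  · filter_upwards [hpos] with x hx
    rw [take_wordOf_add, drop_wordOf_add]
    exact mul_pos hx.1 hx.2
  · rw [blockEntropy_eq_neg_integral_log, blockEntropy_eq_neg_integral_log,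
      integral_comp_wordOf_map_iterate μ (fun I => Real.log (μ'.real (cyl I))), ← neg_add,
      ← integral_add (integrable_comp_wordOf μ (fun I => Real.log (μ.real (cyl I))) a)
        (integrable_comp_wordOf_iterate μ (fun I => Real.log (μ'.real (cyl I))) b a)]
    refine congrArg Neg.neg (integral_congr_ae ?_)
    filter_upwards [hpos] with x hx
    rw [take_wordOf_add, drop_wordOf_add, Real.log_mul hx.1.ne' hx.2.ne']

variable {μ}

lemma tendsto_blockEntropy_div_ent {X : Set (ℕ → A)} (hX : μ X = 1) (hμ : μ.map shiftMap = μ) :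
    Tendsto (fun n : ℕ => blockEntropy μ n / n) atTop (𝓝 (ent X μ)) := by
  have hsub : Subadditive (blockEntropy μ) := fun a b => by
    simpa only [map_iterate_shiftMap hμ] using blockEntropy_add_le μ a b
  have hlim := hsub.tendsto_lim ⟨0, by
    rintro _ ⟨n, rfl⟩
    exact div_nonneg (blockEntropy_nonneg μ n) n.cast_nonneg⟩
  simp only [ent, Hblock_eq_blockEntropy hX]
  rwa [hlim.liminf_eq]

end BlockEntropy

section BlockPressure

variable {A : Type}

/-- Word functions on the full shift which, as every sub-multiplicative function on a language
extended by zero does, satisfy the sub-multiplicativity and growth bounds with one constant. -/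
structure SubmultWith (K : ℝ) (φ : List A → ℝ) : Prop where
  one_le : 1 ≤ K
  nonneg (I : List A) : 0 ≤ φ I
  append_le (I J : List A) : φ (I ++ J) ≤ K * (φ I * φ J)
  le_pow_length (I : List A) : φ I ≤ K ^ I.length

namespace SubmultWith

variable {K : ℝ} {φ : List A → ℝ}

lemma pos (hφ : SubmultWith K φ) : 0 < K := zero_lt_one.trans_le hφ.one_le

lemma pos_of_append (hφ : SubmultWith K φ) {I J : List A} (h : 0 < φ (I ++ J)) :
    0 < φ I ∧ 0 < φ J := by
  have hmul : 0 < φ I * φ J := pos_of_mul_pos_right (h.trans_le (hφ.append_le I J)) hφ.pos.le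
  exact ⟨pos_of_mul_pos_left hmul (hφ.nonneg J), pos_of_mul_pos_right hmul (hφ.nonneg I)⟩

lemma log_append_le (hφ : SubmultWith K φ) {I J : List A} (h : 0 < φ (I ++ J)) :
    Real.log (φ (I ++ J)) ≤ Real.log (φ I) + Real.log (φ J) + Real.log K := by
  obtain ⟨hI, hJ⟩ := hφ.pos_of_append h
  refine (Real.log_le_log h (hφ.append_le I J)).trans_eq ?_
  rw [Real.log_mul hφ.pos.ne' (mul_pos hI hJ).ne', Real.log_mul hI.ne' hJ.ne']
  ring

lemma log_le (hφ : SubmultWith K φ) (I : List A) : Real.log (φ I) ≤ I.length * Real.log K := by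
  rw [← Real.log_pow]
  rcases (hφ.nonneg I).eq_or_lt with h | h
  · rw [← h, Real.log_zero]
    exact Real.log_nonneg (one_le_pow₀ hφ.one_le)
  · exact Real.log_le_log h (hφ.le_pow_length I)

variable [MeasurableSpace A]

lemma ae_pos_of_add (hφ : SubmultWith K φ) {μ : Measure (ℕ → A)} {a b : ℕ}
    (h : ∀ᵐ x ∂μ, 0 < φ (wordOf x (a + b))) : ∀ᵐ x ∂μ, 0 < φ (wordOf x a) := by
  filter_upwards [h] with x hx
  rw [wordOf_add] at hx
  exact (hφ.pos_of_append hx).1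

lemma ae_map_pos_of_add [Finite A] [MeasurableSingletonClass A] (hφ : SubmultWith K φ)
    {μ : Measure (ℕ → A)} {a b : ℕ} (h : ∀ᵐ x ∂μ, 0 < φ (wordOf x (a + b))) :
    ∀ᵐ x ∂μ.map shiftMap^[a], 0 < φ (wordOf x b) := by
  refine (ae_map_iff (measurable_iterate_shiftMap a).aemeasurable
    (measurableSet_wordOf {I | 0 < φ I} b)).2 ?_
  filter_upwards [h] with x hx
  rw [wordOf_add] at hx
  exact (hφ.pos_of_append hx).2

end SubmultWith

variable [MeasurableSpace A]

instance isProbabilityMeasure_map_iterate_shiftMap (μ : Measure (ℕ → A)) [IsProbabilityMeasure μ]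
    (k : ℕ) : IsProbabilityMeasure (μ.map shiftMap^[k]) :=
  Measure.isProbabilityMeasure_map (measurable_iterate_shiftMap k).aemeasurable

variable [Fintype A]

/-- The free energy of the distribution of the initial `n`-word under `μ`, for the energy `log φ`.
It is only meaningful when `φ` is positive on `μ`-almost every `n`-word, as `Real.log 0 = 0`. -/
noncomputable def blockPressure (φ : List A → ℝ) (μ : Measure (ℕ → A)) (n : ℕ) : ℝ :=
  ∫ x, Real.log (φ (wordOf x n)) ∂μ + blockEntropy μ n

variable [MeasurableSingletonClass A] {K : ℝ} {φ : List A → ℝ} {μ : Measure (ℕ → A)}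
  [IsProbabilityMeasure μ]

lemma blockPressure_le (hφ : SubmultWith K φ) (μ : Measure (ℕ → A)) [IsProbabilityMeasure μ]
    (n : ℕ) : blockPressure φ μ n ≤ n * (Real.log K + Real.log (Fintype.card A)) := by
  have hlog : ∫ x, Real.log (φ (wordOf x n)) ∂μ ≤ n * Real.log K := by
    simpa using integral_mono (integrable_comp_wordOf μ (fun I => Real.log (φ I)) n)
      (integrable_const (n * Real.log K)) fun x => by
        simpa only [length_wordOf] using hφ.log_le (wordOf x n)
  rw [mul_add]
  exact add_le_add hlog (blockEntropy_le_mul_log_card μ n)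

lemma blockPressure_add_le (hφ : SubmultWith K φ) {a b : ℕ}
    (hpos : ∀ᵐ x ∂μ, 0 < φ (wordOf x (a + b))) :
    blockPressure φ μ (a + b) ≤
      blockPressure φ μ a + blockPressure φ (μ.map shiftMap^[a]) b + Real.log K := by
  have hlog : ∫ x, Real.log (φ (wordOf x (a + b))) ∂μ ≤ ∫ x, Real.log (φ (wordOf x a)) ∂μ +
      ∫ x, Real.log (φ (wordOf x b)) ∂μ.map shiftMap^[a] + Real.log K := by
    have ha := integrable_comp_wordOf μ (fun I => Real.log (φ I)) a
    have hb := integrable_comp_wordOf_iterate μ (fun I => Real.log (φ I)) b a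
    rw [integral_comp_wordOf_map_iterate μ (fun I => Real.log (φ I)), ← integral_add ha hb]
    refine (integral_mono_ae (integrable_comp_wordOf μ (fun I => Real.log (φ I)) (a + b))
      ((ha.add hb).add (integrable_const (Real.log K))) ?_).trans_eq ?_
    · filter_upwards [hpos] with x hx
      rw [wordOf_add] at hx ⊢
      exact hφ.log_append_le hx
    · rw [integral_add' (ha.add hb) (integrable_const _)]
      simp
  have hent := blockEntropy_add_le μ a b
  unfold blockPressure
  linarith

lemma blockPressure_mul_add_le (hφ : SubmultWith K φ) {m : ℕ} (N s : ℕ)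
    (hpos : ∀ᵐ x ∂μ, 0 < φ (wordOf x (N * m + s))) :
    blockPressure φ μ (N * m + s) ≤
      ∑ i ∈ Finset.range N, blockPressure φ (μ.map shiftMap^[i * m]) m +
        blockPressure φ (μ.map shiftMap^[N * m]) s + N * Real.log K := by
  induction N generalizing s with
  | zero => simp [Measure.map_id]
  | succ N ih =>
    have hlen : (N + 1) * m + s = N * m + (m + s) := by ring
    rw [hlen] at hpos ⊢
    have hstep := blockPressure_add_le hφ (hφ.ae_map_pos_of_add hpos)
    rw [Measure.map_map (measurable_iterate_shiftMap m) (measurable_iterate_shiftMap _),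
      ← Function.iterate_add, add_comm m (N * m), ← Nat.succ_mul] at hstep
    rw [Finset.sum_range_succ]
    push_cast
    linarith [ih _ hpos]

lemma sum_range_sum_range_add_mul (m N : ℕ) (g : ℕ → ℝ) :
    ∑ j ∈ Finset.range m, ∑ i ∈ Finset.range N, g (j + i * m) =
      ∑ k ∈ Finset.range (N * m), g k := by
  rw [Finset.sum_comm]
  induction N with
  | zero => simp
  | succ N ih =>
    rw [Finset.sum_range_succ, ih, Nat.succ_mul, Finset.sum_range_add]
    simp only [add_comm]

/-- Cutting an initial word of length `j` and then `N` blocks of length `m`, for each `j < m`,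
uses every window of length `m` starting before `N * m` exactly once. -/
lemma mul_blockPressure_le_sum (hφ : SubmultWith K φ) {m N l : ℕ} (hm : m ≤ l)
    (hpos : ∀ᵐ x ∂μ, 0 < φ (wordOf x (N * m + l))) :
    m * blockPressure φ μ (N * m + l) ≤
      ∑ k ∈ Finset.range (N * m), blockPressure φ (μ.map shiftMap^[k]) m +
        (N * m) * Real.log K + m * (l + 1) * (Real.log K + Real.log (Fintype.card A)) := by
  have hcard : 0 ≤ Real.log (Fintype.card A) := Real.log_natCast_nonneg _
  have hoffset : ∀ j ∈ Finset.range m, blockPressure φ μ (N * m + l) ≤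
      ∑ i ∈ Finset.range N, blockPressure φ (μ.map shiftMap^[j + i * m]) m +
        (N * Real.log K + (l + 1) * (Real.log K + Real.log (Fintype.card A))) := by
    intro j hj
    have hjl : j ≤ l := (Finset.mem_range.1 hj).le.trans hm
    have hlen : N * m + l = j + (N * m + (l - j)) := by omega
    rw [hlen] at hpos ⊢
    have hhead := blockPressure_add_le hφ hpos
    have hblocks := blockPressure_mul_add_le hφ N (l - j) (hφ.ae_map_pos_of_add hpos)
    simp only [Measure.map_map (measurable_iterate_shiftMap _) (measurable_iterate_shiftMap _),
      ← Function.iterate_add, add_comm _ j] at hblocks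
    have hj' := blockPressure_le hφ μ j
    have htail := blockPressure_le hφ (μ.map shiftMap^[j + N * m]) (l - j)
    rw [Nat.cast_sub hjl] at htail
    linarith
  have hsum := Finset.sum_le_sum hoffset
  rw [Finset.sum_const, Finset.card_range, nsmul_eq_mul, Finset.sum_add_distrib,
    sum_range_sum_range_add_mul m N fun k => blockPressure φ (μ.map shiftMap^[k]) m,
    Finset.sum_const, Finset.card_range, nsmul_eq_mul] at hsum
  linarith

end BlockPressure

section OrbitAverage

variable {A : Type} [MeasurableSpace A]

/-- The average of the first `M` translates of `μ` under the shift. -/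
noncomputable def orbitAverage (μ : Measure (ℕ → A)) (M : ℕ) : Measure (ℕ → A) :=
  (M : ℝ≥0∞)⁻¹ • ∑ k ∈ Finset.range M, μ.map shiftMap^[k]

variable {μ : Measure (ℕ → A)} {M : ℕ}

lemma ae_orbitAverage_iff {p : (ℕ → A) → Prop} :
    (∀ᵐ x ∂orbitAverage μ M, p x) ↔ ∀ k < M, ∀ᵐ x ∂μ.map shiftMap^[k], p x := by
  rw [orbitAverage, Measure.ae_ennreal_smul_measure_iff
    (ENNReal.inv_ne_zero.2 (ENNReal.natCast_ne_top M)), ae_finsetSum_measure_iff]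
  simp only [Finset.mem_range]

variable [IsProbabilityMeasure μ]

lemma isProbabilityMeasure_orbitAverage (hM : M ≠ 0) :
    IsProbabilityMeasure (orbitAverage μ M) where
  measure_univ := by
    simp only [orbitAverage, Measure.smul_apply, Measure.finsetSum_apply, measure_univ,
      Finset.sum_const, Finset.card_range, nsmul_eq_mul, mul_one, smul_eq_mul]
    exact ENNReal.inv_mul_cancel (by exact_mod_cast hM) (ENNReal.natCast_ne_top M)

variable [MeasurableSingletonClass A]

lemma mul_integral_comp_wordOf_orbitAverage [Finite A] (hM : M ≠ 0) (F : List A → ℝ) (n : ℕ) :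
    M * ∫ x, F (wordOf x n) ∂orbitAverage μ M =
      ∑ k ∈ Finset.range M, ∫ x, F (wordOf x n) ∂μ.map shiftMap^[k] := by
  rw [orbitAverage, integral_smul_measure,
    integral_finsetSum_measure fun k _ => integrable_comp_wordOf _ F n]
  simp [hM]

lemma sum_blockPressure_le_mul_orbitAverage [Fintype A] (hM : M ≠ 0) (φ : List A → ℝ) (m : ℕ) :
    ∑ k ∈ Finset.range M, blockPressure φ (μ.map shiftMap^[k]) m ≤
      M * blockPressure φ (orbitAverage μ M) m := by
  have := isProbabilityMeasure_orbitAverage (μ := μ) hM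
  set p : List A → ℝ := fun I => (orbitAverage μ M).real (cyl I)
  have hgibbs : ∀ k ∈ Finset.range M, blockEntropy (μ.map shiftMap^[k]) m ≤
      -∫ x, Real.log (p (wordOf x m)) ∂μ.map shiftMap^[k] := fun k hk =>
    blockEntropy_le_neg_integral_log _ (fun _ => measureReal_nonneg)
      (sum_measureReal_cyl _ m).le
      (ae_orbitAverage_iff.1 (ae_measureReal_cyl_wordOf_pos _ m) k (Finset.mem_range.1 hk))
  have hsum := Finset.sum_le_sum hgibbs
  rw [Finset.sum_neg_distrib,
    ← mul_integral_comp_wordOf_orbitAverage hM (fun I => Real.log (p I))] at hsum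
  simp only [blockPressure, Finset.sum_add_distrib, mul_add, blockEntropy_eq_neg_integral_log _ m,
    ← mul_integral_comp_wordOf_orbitAverage hM fun I => Real.log (φ I)] at hsum ⊢
  linarith

lemma mul_blockPressure_le_mul_orbitAverage [Fintype A] {K : ℝ} {φ : List A → ℝ}
    (hφ : SubmultWith K φ) {m l : ℕ} (hm : m ≤ l) (hM : M ≠ 0) (hmM : m ∣ M)
    (hpos : ∀ᵐ x ∂μ, 0 < φ (wordOf x (M + l))) :
    m * blockPressure φ μ (M + l) ≤ M * (blockPressure φ (orbitAverage μ M) m + Real.log K) +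
      m * (l + 1) * (Real.log K + Real.log (Fintype.card A)) := by
  obtain ⟨N, rfl⟩ := hmM
  rw [mul_comm m N] at *
  have hsum := mul_blockPressure_le_sum hφ hm hpos
  have havg := sum_blockPressure_le_mul_orbitAverage (μ := μ) hM φ m
  push_cast at havg ⊢
  linarith

end OrbitAverage

section LogIntegral

variable {Ω : Type*} [MeasurableSpace Ω] {μ : Measure Ω} {g : Ω → ℝ}

lemma intlog_congr_ae {f : Ω → ℝ} (h : f =ᵐ[μ] g) : intlog μ f = intlog μ g := by
  unfold intlog
  congr 2 <;> exact lintegral_congr_ae (h.mono fun x hx => by simp only [hx])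

lemma intlog_eq_integral (hg : Integrable (fun x => Real.log (g x)) μ) (hpos : ∀ᵐ x ∂μ, 0 < g x) :
    intlog μ g = (∫ x, Real.log (g x) ∂μ : ℝ) := by
  have hneg : ∫⁻ x, (if g x ≤ 0 then ⊤ else ENNReal.ofReal (-Real.log (g x))) ∂μ =
      ∫⁻ x, ENNReal.ofReal (-Real.log (g x)) ∂μ :=
    lintegral_congr_ae (hpos.mono fun x hx => if_neg hx.not_ge)
  have hnegfin : ∫⁻ x, ENNReal.ofReal (-Real.log (g x)) ∂μ ≠ ⊤ := hg.neg.lintegral_lt_top.ne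
  rw [intlog, hneg, integral_eq_lintegral_pos_part_sub_lintegral_neg_part hg, EReal.coe_sub,
    EReal.coe_ennreal_toReal hg.lintegral_lt_top.ne, EReal.coe_ennreal_toReal hnegfin]

lemma intlog_eq_bot (hgm : Measurable g) (hg : Integrable (fun x => Real.log (g x)) μ)
    (hpos : ¬ ∀ᵐ x ∂μ, 0 < g x) : intlog μ g = ⊥ := by
  have htop : ∫⁻ x, (if g x ≤ 0 then ⊤ else ENNReal.ofReal (-Real.log (g x))) ∂μ = ⊤ := by
    by_contra hfin
    have hmeas : Measurable fun x => if g x ≤ 0 then ⊤ else ENNReal.ofReal (-Real.log (g x)) :=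
      .ite (measurableSet_le hgm measurable_const) measurable_const
        (Real.measurable_log.comp hgm).neg.ennreal_ofReal
    refine hpos ((ae_lt_top hmeas hfin).mono fun x hx => ?_)
    by_contra hx0
    exact hx.ne (if_pos (not_lt.1 hx0))
  rw [intlog, htop, ← EReal.coe_ennreal_toReal hg.lintegral_lt_top.ne]
  exact EReal.sub_top _

lemma intlog_rpow (hgm : Measurable g) (hg : Integrable (fun x => Real.log (g x)) μ)
    (hnonneg : ∀ᵐ x ∂μ, 0 ≤ g x) {c : ℝ} (hc : 0 < c) :
    intlog μ (fun x => g x ^ c) = c * intlog μ g := by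
  have hlog : (fun x => Real.log (g x ^ c)) =ᵐ[μ] fun x => c * Real.log (g x) := by
    filter_upwards [hnonneg] with x hx
    rcases hx.eq_or_lt with h | h
    · simp [← h, Real.zero_rpow hc.ne']
    · exact Real.log_rpow h c
  have hint : Integrable (fun x => Real.log (g x ^ c)) μ := (hg.const_mul c).congr hlog.symm
  by_cases hpos : ∀ᵐ x ∂μ, 0 < g x
  · rw [intlog_eq_integral hint (hpos.mono fun x hx => Real.rpow_pos_of_pos hx c),
      intlog_eq_integral hg hpos, integral_congr_ae hlog, integral_const_mul, EReal.coe_mul]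
  · rw [intlog_eq_bot hgm hg hpos, EReal.coe_mul_bot_of_pos hc]
    refine intlog_eq_bot (hgm.pow_const c) hint fun h => hpos ?_
    filter_upwards [h, hnonneg] with x hx hx0
    exact hx0.lt_of_ne fun h0 => by simp [← h0, Real.zero_rpow hc.ne'] at hx

end LogIntegral

section LimitingPressure

variable {A : Type} [MeasurableSpace A]

lemma PhiStar_genPot_rpow [Finite A] [MeasurableSingletonClass A] {μ : Measure (ℕ → A)}
    [IsFiniteMeasure μ] {φ : List A → ℝ} (hφ : ∀ n, ∀ᵐ x ∂μ, 0 ≤ φ (wordOf x n)) {c : ℝ}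
    (hc : 0 < c) : PhiStar μ (genPot fun I => φ I ^ c) = c * PhiStar μ (genPot φ) := by
  unfold PhiStar
  rw [← EReal.liminf_const_mul_of_nonneg_of_ne_top (EReal.coe_nonneg.2 hc.le) (EReal.coe_ne_top c)]
  refine congrArg (liminf · atTop) (funext fun n => ?_)
  have hlog : intlog μ (genPot (fun I => φ I ^ c) n) = c * intlog μ (genPot φ n) :=
    intlog_rpow (measurable_comp_wordOf φ n)
      (integrable_comp_wordOf μ (fun I => Real.log (φ I)) n) (hφ n) hc
  rw [hlog, mul_left_comm]

variable [Fintype A]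

lemma eqVal_congr_ae {X : Set (ℕ → A)} {Φ Ψ : ℕ → (ℕ → A) → ℝ} {μ : ProbabilityMeasure (ℕ → A)}
    (h : ∀ n, Φ n =ᵐ[(μ : Measure (ℕ → A))] Ψ n) : eqVal X Φ μ = eqVal X Ψ μ := by
  simp only [eqVal, PhiStar, intlog_congr_ae (h _)]

/-- `blockPressure` with the value `⊥` when `φ` fails to be positive on `μ`-almost every `n`-word,
that is, when the energy `∫ log φ` is `-∞`. -/
noncomputable def extBlockPressure (φ : List A → ℝ) (μ : Measure (ℕ → A)) (n : ℕ) : EReal :=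
  if ∀ᵐ x ∂μ, 0 < φ (wordOf x n) then (blockPressure φ μ n : EReal) else ⊥

variable [MeasurableSingletonClass A] {φ : List A → ℝ}

lemma intlog_add_blockEntropy (μ : Measure (ℕ → A)) [IsFiniteMeasure μ] (n : ℕ) :
    intlog μ (genPot φ n) + (blockEntropy μ n : ℝ) = extBlockPressure φ μ n := by
  have hlog := integrable_comp_wordOf μ (fun I => Real.log (φ I)) n
  unfold extBlockPressure
  split_ifs with hpos
  · rw [intlog_eq_integral (g := genPot φ n) hlog hpos, blockPressure, EReal.coe_add]
    rfl
  · rw [intlog_eq_bot (g := genPot φ n) (measurable_comp_wordOf φ n) hlog hpos, EReal.bot_add]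

lemma liminf_add_coe {f : ℕ → EReal} {g : ℕ → ℝ} {b : ℝ} (hg : Tendsto g atTop (𝓝 b)) :
    liminf (fun n => f n + (g n : EReal)) atTop = liminf f atTop + b := by
  have hg' : Tendsto (fun n => (g n : EReal)) atTop (𝓝 (b : EReal)) :=
    (continuous_coe_real_ereal.tendsto b).comp hg
  refine le_antisymm ?_ ?_
  · have h := EReal.liminf_add_le (f := atTop) (u := fun n => (g n : EReal)) (v := f)
      (by simp [hg'.limsup_eq]) (by simp [hg'.limsup_eq])
    rw [hg'.limsup_eq, add_comm (b : EReal)] at h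
    simpa only [Pi.add_def, add_comm] using h
  · exact hg'.liminf_eq ▸ EReal.le_liminf_add (f := atTop) (u := f) (v := fun n => (g n : EReal))

variable {X : Set (ℕ → A)} {μ : ProbabilityMeasure (ℕ → A)}

lemma eqVal_genPot_eq_liminf (hμ : μ ∈ MInv X) :
    eqVal X (genPot φ) μ =
      liminf (fun n : ℕ => ((n : ℝ)⁻¹ : ℝ) * extBlockPressure φ μ n) atTop := by
  rw [eqVal, PhiStar, ← liminf_add_coe (tendsto_blockEntropy_div_ent hμ.2 hμ.1)]
  refine congrArg (liminf · atTop) (funext fun n => ?_)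
  rw [← intlog_add_blockEntropy, EReal.left_distrib_of_nonneg_of_ne_top
    (EReal.coe_nonneg.2 (by positivity)) (EReal.coe_ne_top _), ← EReal.coe_mul, div_eq_inv_mul]

lemma eventually_of_lt_eqVal_genPot (hμ : μ ∈ MInv X) {t : ℝ} (ht : t < eqVal X (genPot φ) μ) :
    ∀ᶠ n : ℕ in atTop, (∀ᵐ x ∂(μ : Measure (ℕ → A)), 0 < φ (wordOf x n)) ∧
      n * t ≤ blockPressure φ μ n := by
  rw [eqVal_genPot_eq_liminf hμ] at ht
  filter_upwards [eventually_lt_of_lt_liminf ht, eventually_gt_atTop 0] with n hn hn0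
  have hn0' : (0 : ℝ) < n := Nat.cast_pos.2 hn0
  unfold extBlockPressure at hn
  split_ifs at hn with hpos
  · rw [← EReal.coe_mul, EReal.coe_lt_coe_iff, lt_inv_mul_iff₀ hn0'] at hn
    exact ⟨hpos, hn.le⟩
  · rw [EReal.coe_mul_bot_of_pos (inv_pos.2 hn0')] at hn
    exact absurd hn not_lt_bot

lemma le_eqVal_genPot (hμ : μ ∈ MInv X) {t c : ℝ}
    (hpos : ∀ n, n ≠ 0 → ∀ᵐ x ∂(μ : Measure (ℕ → A)), 0 < φ (wordOf x n))
    (hle : ∀ n : ℕ, n ≠ 0 → n * t ≤ blockPressure φ μ n + c) : t ≤ eqVal X (genPot φ) μ := by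
  rw [eqVal_genPot_eq_liminf hμ]
  have hlim : Tendsto (fun n : ℕ => ((t - c / n : ℝ) : EReal)) atTop (𝓝 (t : EReal)) := by
    refine (continuous_coe_real_ereal.tendsto t).comp ?_
    simpa using tendsto_const_nhds.sub (tendsto_const_div_atTop_nhds_zero_nat c)
  rw [← hlim.liminf_eq]
  refine liminf_le_liminf ?_
  filter_upwards [eventually_ne_atTop 0] with n hn
  have hn0 : (0 : ℝ) < n := Nat.cast_pos.2 (Nat.pos_of_ne_zero hn)
  rw [extBlockPressure, if_pos (hpos n hn), ← EReal.coe_mul, EReal.coe_le_coe_iff,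
    le_inv_mul_iff₀ hn0, mul_sub, mul_div_cancel₀ _ hn0.ne']
  linarith [hle n hn]

end LimitingPressure

section LangExt

variable {A : Type} {X : Set (ℕ → A)} {φ : List A → ℝ}

/-- Extension by zero of a word function on the language of `X` to all words. -/
noncomputable def langExt (X : Set (ℕ → A)) (φ : List A → ℝ) (I : List A) : ℝ :=
  if Lang X I then φ I else 0

lemma langExt_wordOf {x : ℕ → A} (hx : x ∈ X) (n : ℕ) :
    langExt X φ (wordOf x n) = φ (wordOf x n) :=
  if_pos (lang_wordOf hx n)

lemma Submult.langExt_nonneg (hφ : Submult X φ) (I : List A) : 0 ≤ langExt X φ I := by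
  unfold langExt
  split_ifs with hI
  exacts [hφ.1 I hI, le_rfl]

lemma Submult.rpow (hX : Set.MapsTo shiftMap X X) (hφ : Submult X φ) {c : ℝ} (hc : 0 ≤ c) :
    Submult X fun I => φ I ^ c := by
  obtain ⟨hnonneg, hnil, d, hd, happend⟩ := hφ
  refine ⟨fun I hI => Real.rpow_nonneg (hnonneg I hI) c, by simp [hnil], d ^ c, by positivity,
    fun I J hIJ => ?_⟩
  have hI := hnonneg I hIJ.of_append_left
  have hJ := hnonneg J (hIJ.of_append_right hX)
  rw [← Real.inv_rpow hd.le, ← Real.mul_rpow (by positivity) hI, ← Real.mul_rpow (by positivity) hJ]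
  exact Real.rpow_le_rpow (hnonneg _ hIJ) (happend I J hIJ) hc

lemma Submult.exists_submultWith [Finite A] (hX : Set.MapsTo shiftMap X X) (hφ : Submult X φ) :
    ∃ K, SubmultWith K (langExt X φ) := by
  have hnonneg := hφ.langExt_nonneg
  obtain ⟨-, hnil, d, hd, happend⟩ := hφ
  have hext I J : langExt X φ (I ++ J) ≤ d⁻¹ * (langExt X φ I * langExt X φ J) := by
    by_cases hIJ : Lang X (I ++ J)
    · simpa only [langExt, if_pos hIJ, if_pos hIJ.of_append_left, if_pos (hIJ.of_append_right hX),
        mul_assoc] using happend I J hIJ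
    · have := mul_nonneg (hnonneg I) (hnonneg J)
      rw [langExt, if_neg hIJ]
      positivity
  obtain ⟨C, hC⟩ := (Set.finite_range fun a => langExt X φ [a]).bddAbove
  have hK : 1 ≤ max 1 (max d⁻¹ (d⁻¹ * C)) := le_max_left ..
  refine ⟨max 1 (max d⁻¹ (d⁻¹ * C)), hK, hnonneg, fun I J => (hext I J).trans ?_, fun I => ?_⟩
  · refine mul_le_mul_of_nonneg_right ?_ (mul_nonneg (hnonneg I) (hnonneg J))
    exact (le_max_left _ _).trans (le_max_right _ _)
  induction I with
  | nil =>
    unfold langExt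
    split_ifs <;> simp [hnil]
  | cons a I ih =>
    calc langExt X φ (a :: I) ≤ d⁻¹ * (langExt X φ [a] * langExt X φ I) := hext [a] I
      _ = d⁻¹ * langExt X φ [a] * langExt X φ I := (mul_assoc ..).symm
      _ ≤ max 1 (max d⁻¹ (d⁻¹ * C)) * max 1 (max d⁻¹ (d⁻¹ * C)) ^ I.length := by
        refine mul_le_mul ?_ ih (hnonneg I) (zero_le_one.trans hK)
        refine le_trans ?_ ((le_max_right _ _).trans (le_max_right _ _))
        exact mul_le_mul_of_nonneg_left (hC ⟨a, rfl⟩) (inv_nonneg.2 hd.le)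
      _ = _ := (pow_succ' ..).symm

end LangExt

section FiberSum

variable {A B : Type} [Fintype A] (π : A → B) {φ : List A → ℝ}

/-- The projection `J ↦ Σ_{πI = J} φ(I)` of a word function along the one-block map `π`, the sum
being over all words of the full shift. -/
noncomputable def fiberSum (φ : List A → ℝ) (J : List B) : ℝ :=
  ∑ w : Fin J.length → A, if (List.ofFn w).map π = J then φ (List.ofFn w) else 0

lemma fiberSum_eq_sum {J : List B} {n : ℕ} (hJ : J.length = n) :
    fiberSum π φ J = ∑ w : Fin n → A, if (List.ofFn w).map π = J then φ (List.ofFn w) else 0 := by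
  subst hJ
  rfl

lemma le_fiberSum_map (hφ : ∀ I, 0 ≤ φ I) (I : List A) : φ I ≤ fiberSum π φ (I.map π) := by
  rw [fiberSum_eq_sum π (I.length_map π)]
  refine le_trans ?_ (Finset.single_le_sum (fun w _ => ?_) (Finset.mem_univ I.get))
  · simp
  · split_ifs
    exacts [hφ _, le_rfl]

lemma fiberSum_nonneg (hφ : ∀ I, 0 ≤ φ I) (J : List B) : 0 ≤ fiberSum π φ J :=
  Finset.sum_nonneg fun w _ => by split_ifs <;> [exact hφ _; exact le_rfl]

lemma sum_mul_comp_map [Fintype B] (G : List B → ℝ) (n : ℕ) :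
    ∑ w : Fin n → A, φ (List.ofFn w) * G ((List.ofFn w).map π) =
      ∑ v : Fin n → B, fiberSum π φ (List.ofFn v) * G (List.ofFn v) := by
  simp only [fiberSum_eq_sum π List.length_ofFn, Finset.sum_mul, ite_mul, zero_mul]
  rw [Finset.sum_comm]
  refine Finset.sum_congr rfl fun w _ => ?_
  simp only [List.map_ofFn, List.ofFn_injective.eq_iff, Finset.sum_ite_eq, Finset.mem_univ, if_true]

lemma psiProj_eq_fiberSum_langExt (X : Set (ℕ → A)) :
    psiProj X π φ = fiberSum π (langExt X φ) := by
  funext J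
  simp only [psiProj, fiberSum, langExt, ← ite_and, and_comm]

lemma phiTwo_eq_psiProj_rpow (X : Set (ℕ → A)) (a₁ : ℝ) :
    phiTwo X π φ a₁ = fun J => psiProj X π (fun I => φ I ^ a₁⁻¹) J ^ a₁ := rfl

end FiberSum

section FiberWeight

variable {A B : Type} [MeasurableSpace B] [Fintype A] (π : A → B) (φ : List A → ℝ)
  (ν : Measure (ℕ → B))

/-- The word distribution that projects to `ν` and is proportional to `φ` on each fibre of `π`. -/
noncomputable def fiberWeight (I : List A) : ℝ :=
  φ I * (ν.real (cyl (I.map π)) / fiberSum π φ (I.map π))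

variable {π φ ν}

lemma fiberWeight_nonneg (hφ : ∀ I, 0 ≤ φ I) (I : List A) : 0 ≤ fiberWeight π φ ν I :=
  mul_nonneg (hφ I) (div_nonneg measureReal_nonneg ((hφ I).trans (le_fiberSum_map π hφ I)))

variable [MeasurableSingletonClass B] {n : ℕ}

lemma sum_fiberWeight_mul_comp_map [Finite B] [IsFiniteMeasure ν]
    (hψ : ∀ᵐ y ∂ν, 0 < fiberSum π φ (wordOf y n)) (F : List B → ℝ) :
    ∑ w : Fin n → A, fiberWeight π φ ν (List.ofFn w) * F ((List.ofFn w).map π) =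
      ∫ y, F (wordOf y n) ∂ν := by
  have := Fintype.ofFinite B
  have h := sum_mul_comp_map π (φ := φ) (fun J => ν.real (cyl J) / fiberSum π φ J * F J) n
  simp only [fiberWeight, mul_assoc, h]
  calc ∑ v : Fin n → B, fiberSum π φ (List.ofFn v) *
        (ν.real (cyl (List.ofFn v)) / fiberSum π φ (List.ofFn v) * F (List.ofFn v))
    _ = ∫ y, fiberSum π φ (wordOf y n) / fiberSum π φ (wordOf y n) * F (wordOf y n) ∂ν := by
        rw [integral_comp_wordOf ν fun J => fiberSum π φ J / fiberSum π φ J * F J]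
        exact Finset.sum_congr rfl fun v _ => by ring
    _ = ∫ y, F (wordOf y n) ∂ν :=
        integral_congr_ae (hψ.mono fun y hy => by simp only [div_self hy.ne', one_mul])

variable [Fintype B] [MeasurableSpace A] [MeasurableSingletonClass A]

lemma integral_log_fiberWeight [IsFiniteMeasure ν] {μ : Measure (ℕ → A)} [IsFiniteMeasure μ]
    (hmarg : ∀ F : List B → ℝ,
      ∫ x, F (wordOf (blockMap π x) n) ∂μ = ∫ y, F (wordOf y n) ∂ν)
    (hr : ∀ᵐ x ∂μ, 0 < fiberWeight π φ ν (wordOf x n)) :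
    ∫ x, Real.log (fiberWeight π φ ν (wordOf x n)) ∂μ =
      ∫ x, Real.log (φ (wordOf x n)) ∂μ - blockPressure (fiberSum π φ) ν n := by
  let logCond (J : List B) : ℝ := Real.log (ν.real (cyl J)) - Real.log (fiberSum π φ J)
  have hcond : ∫ y, logCond (wordOf y n) ∂ν = -blockPressure (fiberSum π φ) ν n := by
    rw [integral_sub (integrable_comp_wordOf ν (fun J => Real.log (ν.real (cyl J))) n)
      (integrable_comp_wordOf ν (fun J => Real.log (fiberSum π φ J)) n), blockPressure,
      blockEntropy_eq_neg_integral_log]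
    ring
  have hlog : ∀ᵐ x ∂μ, Real.log (fiberWeight π φ ν (wordOf x n)) =
      Real.log (φ (wordOf x n)) + logCond (wordOf (blockMap π x) n) := by
    filter_upwards [hr] with x hx
    obtain ⟨hφx, hquot⟩ := mul_ne_zero_iff.1 hx.ne'
    obtain ⟨hνx, hψx⟩ := div_ne_zero_iff.1 hquot
    rw [fiberWeight, Real.log_mul hφx hquot, Real.log_div hνx hψx, wordOf_blockMap]
  rw [integral_congr_ae hlog, integral_add (integrable_comp_wordOf μ (fun I => Real.log (φ I)) n),
    hmarg, hcond, sub_eq_add_neg]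
  simpa only [wordOf_blockMap] using integrable_comp_wordOf μ (fun I => logCond (I.map π)) n

lemma extBlockPressure_le_map_blockMap (hφ : ∀ I, 0 ≤ φ I) (μ : Measure (ℕ → A))
    [IsProbabilityMeasure μ] (n : ℕ) :
    extBlockPressure φ μ n ≤ extBlockPressure (fiberSum π φ) (μ.map (blockMap π)) n := by
  have hπ := (measurable_blockMap (measurable_of_finite π)).aemeasurable (μ := μ)
  have := Measure.isProbabilityMeasure_map hπ
  have hmarg (F : List B → ℝ) :
      ∫ x, F (wordOf (blockMap π x) n) ∂μ = ∫ y, F (wordOf y n) ∂μ.map (blockMap π) :=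
    (integral_comp_wordOf_map_blockMap (measurable_of_finite π) μ F n).symm
  by_cases hpos : ∀ᵐ x ∂μ, 0 < φ (wordOf x n)
  swap
  · rw [extBlockPressure, if_neg hpos]
    exact bot_le
  have hψx {x : ℕ → A} (hx : 0 < φ (wordOf x n)) : 0 < fiberSum π φ (wordOf (blockMap π x) n) := by
    rw [wordOf_blockMap]
    exact hx.trans_le (le_fiberSum_map π hφ _)
  have hψ : ∀ᵐ y ∂μ.map (blockMap π), 0 < fiberSum π φ (wordOf y n) :=
    (ae_map_iff hπ (measurableSet_wordOf {J | 0 < fiberSum π φ J} n)).2 (hpos.mono fun _ => hψx)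
  have hr : ∀ᵐ x ∂μ, 0 < fiberWeight π φ (μ.map (blockMap π)) (wordOf x n) := by
    filter_upwards [hpos, ae_of_ae_map hπ (ae_measureReal_cyl_wordOf_pos _ n)] with x hx hνx
    rw [fiberWeight, ← wordOf_blockMap]
    exact mul_pos hx (div_pos hνx (hψx hx))
  have hsum := sum_fiberWeight_mul_comp_map hψ fun _ => 1
  have hgibbs := blockEntropy_le_neg_integral_log μ (fun _ => fiberWeight_nonneg hφ _)
    (le_of_eq (by simpa using hsum)) hr
  rw [extBlockPressure, extBlockPressure, if_pos hpos, if_pos hψ, EReal.coe_le_coe_iff,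
    blockPressure]
  linarith [integral_log_fiberWeight hmarg hr]

lemma exists_measureReal_cyl_eq (hn : n ≠ 0) {r : List A → ℝ}
    (hr : ∀ w : Fin n → A, 0 ≤ r (List.ofFn w)) (hsum : ∑ w : Fin n → A, r (List.ofFn w) = 1) :
    ∃ Q : ProbabilityMeasure (ℕ → A), ∀ w : Fin n → A,
      (Q : Measure (ℕ → A)).real (cyl (List.ofFn w)) = r (List.ofFn w) := by
  choose pt hpt using fun w : Fin n → A => exists_mem_cyl_ofFn hn w
  let Q := ∑ w : Fin n → A, ENNReal.ofReal (r (List.ofFn w)) • Measure.dirac (pt w)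
  have hQ (s : Set (ℕ → A)) (hs : MeasurableSet s) :
      Q s = ∑ w, if pt w ∈ s then ENNReal.ofReal (r (List.ofFn w)) else 0 := by
    simp [Q, Measure.finsetSum_apply, Measure.dirac_apply' _ hs, Set.indicator_apply]
  have hprob : IsProbabilityMeasure Q := ⟨by
    simp [hQ _ .univ, ← ENNReal.ofReal_sum_of_nonneg fun w _ => hr w, hsum]⟩
  refine ⟨⟨Q, hprob⟩, fun w => ?_⟩
  have hmem (v : Fin n → A) : pt v ∈ cyl (List.ofFn w) ↔ v = w := by
    rw [mem_cyl_ofFn_iff, mem_cyl_ofFn_iff.1 (hpt v), List.ofFn_injective.eq_iff]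
  simp [measureReal_def, hQ _ (measurableSet_cyl _), hmem, hr]

lemma exists_blockPressure_eq_fiberSum (hφ : ∀ I, 0 ≤ φ I) [IsProbabilityMeasure ν] (hn : n ≠ 0)
    (hψ : ∀ᵐ y ∂ν, 0 < fiberSum π φ (wordOf y n)) :
    ∃ Q : ProbabilityMeasure (ℕ → A),
      (∀ᵐ x ∂(Q : Measure (ℕ → A)), 0 < φ (wordOf x n)) ∧
      (∀ F : List B → ℝ, ∫ x, F (wordOf (blockMap π x) n) ∂(Q : Measure (ℕ → A)) =
        ∫ y, F (wordOf y n) ∂ν) ∧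
      blockPressure φ Q n = blockPressure (fiberSum π φ) ν n := by
  have hsum := sum_fiberWeight_mul_comp_map hψ
  obtain ⟨Q, hQ⟩ := exists_measureReal_cyl_eq hn (fun _ => fiberWeight_nonneg hφ _)
    (by simpa using hsum fun _ => 1)
  have hword (x : ℕ → A) :
      (Q : Measure (ℕ → A)).real (cyl (wordOf x n)) = fiberWeight π φ ν (wordOf x n) := hQ _
  have hr : ∀ᵐ x ∂(Q : Measure (ℕ → A)), 0 < fiberWeight π φ ν (wordOf x n) := by
    simpa only [hword] using ae_measureReal_cyl_wordOf_pos (Q : Measure (ℕ → A)) n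
  have hmarg (F : List B → ℝ) : ∫ x, F (wordOf (blockMap π x) n) ∂(Q : Measure (ℕ → A)) =
      ∫ y, F (wordOf y n) ∂ν := by
    simp only [wordOf_blockMap, integral_comp_wordOf _ fun I => F (I.map π), hQ, hsum F]
  refine ⟨Q, hr.mono fun x hx => ?_, hmarg, ?_⟩
  · exact (hφ _).lt_of_ne' (left_ne_zero_of_mul hx.ne')
  · have hent := blockEntropy_eq_neg_integral_log (Q : Measure (ℕ → A)) n
    simp only [hword, integral_log_fiberWeight hmarg hr] at hent
    rw [blockPressure, hent]
    ring

end FiberWeight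

section Limits

variable {A : Type} [TopologicalSpace A]

lemma mem_of_forall_lang {X : Set (ℕ → A)} (hX : IsClosed X) {x : ℕ → A}
    (h : ∀ n, Lang X (wordOf x n)) : x ∈ X := by
  choose y hy hyX using h
  refine hX.mem_of_tendsto (b := atTop) (f := y) ?_ (.of_forall hyX)
  refine tendsto_pi_nhds.2 fun i => tendsto_const_nhds.congr' ?_
  filter_upwards [eventually_gt_atTop i] with n hn
  exact (congrFun (wordOf_eq_ofFn_iff.1 (mem_cyl_ofFn_iff.1 (hy n))) ⟨i, hn⟩).symm

variable [DiscreteTopology A] [Finite A] [MeasurableSpace A] [BorelSpace A] {ι : Type*}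
  {U : Filter ι} {P : ι → ProbabilityMeasure (ℕ → A)} {η : ProbabilityMeasure (ℕ → A)}

lemma tendsto_integral_comp_wordOf (h : Tendsto P U (𝓝 η)) (F : List A → ℝ) (n : ℕ) :
    Tendsto (fun i => ∫ x, F (wordOf x n) ∂(P i : Measure (ℕ → A))) U
      (𝓝 (∫ x, F (wordOf x n) ∂(η : Measure (ℕ → A)))) := by
  have hword : Continuous fun (x : ℕ → A) (i : Fin n) => x i := by fun_prop
  have hF : Continuous fun x : ℕ → A => F (wordOf x n) :=
    (continuous_of_discreteTopology (f := fun w : Fin n → A => F (List.ofFn w))).comp hword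
  exact ProbabilityMeasure.tendsto_iff_forall_integral_tendsto.1 h (.mkOfCompact ⟨_, hF⟩)

lemma ae_wordOf_mem_of_tendsto [U.NeBot] (h : Tendsto P U (𝓝 η)) {S : Set (List A)} {n : ℕ}
    (hS : ∀ᶠ i in U, ∀ᵐ x ∂(P i : Measure (ℕ → A)), wordOf x n ∈ S) :
    ∀ᵐ x ∂(η : Measure (ℕ → A)), wordOf x n ∈ S := by
  let F (I : List A) : ℝ := if I ∈ S then 0 else 1
  have hF : ∀ᶠ i in U, ∫ x, F (wordOf x n) ∂(P i : Measure (ℕ → A)) = 0 := by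
    filter_upwards [hS] with i hi
    exact integral_eq_zero_of_ae (hi.mono fun x hx => if_pos hx)
  have hlim : ∫ x, F (wordOf x n) ∂(η : Measure (ℕ → A)) = 0 :=
    tendsto_nhds_unique (tendsto_integral_comp_wordOf h F n)
      (tendsto_const_nhds.congr' (hF.mono fun _ => Eq.symm))
  have hnonneg : 0 ≤ fun x : ℕ → A => F (wordOf x n) := fun x => by
    by_cases hx : wordOf x n ∈ S <;> simp [F, hx]
  filter_upwards [(integral_eq_zero_iff_of_nonneg hnonneg (integrable_comp_wordOf _ F n)).1 hlim]
    with x hx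
  by_contra hxS
  simp [F, hxS] at hx

end Limits

lemma tendsto_blockPressure {A : Type} [TopologicalSpace A] [DiscreteTopology A] [Fintype A]
    [MeasurableSpace A] [BorelSpace A] {ι : Type*} {U : Filter ι}
    {P : ι → ProbabilityMeasure (ℕ → A)} {η : ProbabilityMeasure (ℕ → A)} (h : Tendsto P U (𝓝 η))
    (φ : List A → ℝ) (n : ℕ) :
    Tendsto (fun i => blockPressure φ (P i) n) U (𝓝 (blockPressure φ η n)) := by
  refine (tendsto_integral_comp_wordOf h (fun I => Real.log (φ I)) n).add
    (tendsto_finsetSum _ fun w _ => (Real.continuous_negMulLog.tendsto _).comp ?_)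
  simpa only [measureReal_cyl_eq_integral _ List.length_ofFn] using
    tendsto_integral_comp_wordOf h (fun I => if I = List.ofFn w then 1 else 0) n

section OrbitAverageLimits

variable {A : Type} [MeasurableSpace A] [MeasurableSingletonClass A]

lemma abs_integral_map_shiftMap_orbitAverage_sub_le [Finite A] {μ : Measure (ℕ → A)}
    [IsProbabilityMeasure μ] {M : ℕ} (hM : M ≠ 0) {F : List A → ℝ} {n : ℕ} {C : ℝ}
    (hC : ∀ x, |F (wordOf x n)| ≤ C) :
    |∫ x, F (wordOf (shiftMap x) n) ∂orbitAverage μ M - ∫ x, F (wordOf x n) ∂orbitAverage μ M| ≤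
      2 * C / M := by
  have hM0 : (0 : ℝ) < M := Nat.cast_pos.2 (Nat.pos_of_ne_zero hM)
  let g (k : ℕ) : ℝ := ∫ x, F (wordOf x n) ∂μ.map shiftMap^[k]
  have hg k : |g k| ≤ C := by
    simpa using norm_integral_le_of_norm_le_const (μ := μ.map shiftMap^[k])
      (f := fun x => F (wordOf x n)) (.of_forall hC)
  have hshift k : ∫ x, F (wordOf (shiftMap x) n) ∂μ.map shiftMap^[k] = g (k + 1) := by
    have hone := integral_comp_wordOf_map_iterate (μ.map shiftMap^[k]) F n 1
    rw [Measure.map_map (measurable_iterate_shiftMap 1) (measurable_iterate_shiftMap k),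
      ← Function.iterate_add, add_comm 1 k] at hone
    exact hone.symm
  have hdrop (x : ℕ → A) : wordOf (shiftMap x) n = (wordOf x (1 + n)).drop 1 :=
    (drop_wordOf_add x 1 n).symm
  have htel : M * (∫ x, F (wordOf (shiftMap x) n) ∂orbitAverage μ M -
      ∫ x, F (wordOf x n) ∂orbitAverage μ M) = g M - g 0 := by
    simp only [mul_sub, mul_integral_comp_wordOf_orbitAverage hM, hdrop,
      mul_integral_comp_wordOf_orbitAverage hM fun I => F (I.drop 1)]
    simp only [← hdrop, hshift, ← Finset.sum_sub_distrib]
    exact Finset.sum_range_sub g M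
  rw [le_div_iff₀' hM0, ← Nat.abs_cast M, ← abs_mul, htel]
  linarith [abs_sub (g M) (g 0), hg M, hg 0]

lemma map_shiftMap_eq_of_tendsto_orbitAverage [Finite A] [TopologicalSpace A] [DiscreteTopology A]
    [BorelSpace A] {ι : Type*} {U : Filter ι} [U.NeBot] {P : ι → ProbabilityMeasure (ℕ → A)}
    {M : ι → ℕ} {η : ProbabilityMeasure (ℕ → A)} (h : Tendsto P U (𝓝 η)) (hM : Tendsto M U atTop)
    (hP : ∀ᶠ i in U, ∃ Q : ProbabilityMeasure (ℕ → A),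
      (P i : Measure (ℕ → A)) = orbitAverage Q (M i)) :
    (η : Measure (ℕ → A)).map shiftMap = η := by
  have hη := isProbabilityMeasure_map_iterate_shiftMap (η : Measure (ℕ → A)) 1
  rw [Function.iterate_one] at hη
  refine eq_of_integral_comp_wordOf_eq fun F n => ?_
  obtain ⟨C, hC⟩ := exists_abs_comp_wordOf_le F n
  have hdrop (x : ℕ → A) : wordOf (shiftMap x) n = (wordOf x (1 + n)).drop 1 :=
    (drop_wordOf_add x 1 n).symm
  have hshift := tendsto_integral_comp_wordOf h (fun I => F (I.drop 1)) (1 + n)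
  simp only [← hdrop] at hshift
  have hzero : Tendsto (fun i => ∫ x, F (wordOf (shiftMap x) n) ∂(P i : Measure (ℕ → A)) -
      ∫ x, F (wordOf x n) ∂(P i : Measure (ℕ → A))) U (𝓝 0) := by
    refine squeeze_zero_norm' ?_ ((tendsto_const_div_atTop_nhds_zero_nat (2 * C)).comp hM)
    filter_upwards [hP, hM.eventually_ne_atTop 0] with i ⟨Q, hQ⟩ hMi
    rw [hQ]
    exact abs_integral_map_shiftMap_orbitAverage_sub_le hMi hC
  have hmap := integral_comp_wordOf_map_iterate (η : Measure (ℕ → A)) F n 1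
  simp only [Function.iterate_one] at hmap
  exact hmap.trans (sub_eq_zero.1 (tendsto_nhds_unique
    (hshift.sub (tendsto_integral_comp_wordOf h F n)) hzero))

end OrbitAverageLimits

section FiberMeasures

variable {A B : Type} [MeasurableSpace A] [MeasurableSpace B] [MeasurableSingletonClass B]
  {π : A → B}

lemma integral_comp_wordOf_blockMap_iterate [Finite B] {μ : Measure (ℕ → A)} {ν : Measure (ℕ → B)}
    (hν : ν.map shiftMap = ν) {n : ℕ}
    (h : ∀ F : List B → ℝ, ∫ x, F (wordOf (blockMap π x) n) ∂μ = ∫ y, F (wordOf y n) ∂ν)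
    (F : List B → ℝ) {k m : ℕ} (hkm : k + m ≤ n) :
    ∫ x, F (wordOf (blockMap π (shiftMap^[k] x)) m) ∂μ = ∫ y, F (wordOf y m) ∂ν := by
  obtain ⟨s, rfl⟩ := Nat.exists_eq_add_of_le hkm
  have hwindow (y : ℕ → B) :
      wordOf (shiftMap^[k] y) m = ((wordOf y (k + m + s)).drop k).take m := by
    rw [add_assoc, drop_wordOf_add, take_wordOf_add]
  simp only [blockMap_iterate_shiftMap, hwindow, h fun J => F ((J.drop k).take m)]
  simp only [← hwindow, ← integral_comp_wordOf_map_iterate, map_iterate_shiftMap hν]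

variable [Fintype A] [MeasurableSingletonClass A] [Fintype B] {φ : List A → ℝ} {K : ℝ}

lemma exists_orbitAverage_factorial (hφ : SubmultWith K φ) {ν : Measure (ℕ → B)}
    [IsProbabilityMeasure ν] (hν : ν.map shiftMap = ν) {l : ℕ}
    (hψ : ∀ᵐ y ∂ν, 0 < fiberSum π φ (wordOf y (l.factorial + l))) :
    ∃ P : ProbabilityMeasure (ℕ → A),
      (∃ Q : ProbabilityMeasure (ℕ → A), (P : Measure (ℕ → A)) = orbitAverage Q l.factorial) ∧
      ∀ m ≤ l,
        (∀ᵐ x ∂(P : Measure (ℕ → A)), 0 < φ (wordOf x m)) ∧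
        (∀ F : List B → ℝ, ∫ x, F (wordOf (blockMap π x) m) ∂(P : Measure (ℕ → A)) =
          ∫ y, F (wordOf y m) ∂ν) ∧
        (m ≠ 0 → m * blockPressure (fiberSum π φ) ν (l.factorial + l) ≤
          l.factorial * (blockPressure φ P m + Real.log K) +
            m * (l + 1) * (Real.log K + Real.log (Fintype.card A))) := by
  have hM := l.factorial_ne_zero
  obtain ⟨Q, hQpos, hQmarg, hQ⟩ := exists_blockPressure_eq_fiberSum hφ.nonneg (by omega) hψ
  have hprob := isProbabilityMeasure_orbitAverage (μ := (Q : Measure (ℕ → A))) hM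
  refine ⟨⟨orbitAverage Q l.factorial, hprob⟩, ⟨Q, rfl⟩,
    fun m hm => ⟨?_, fun F => ?_, fun hm0 => ?_⟩⟩
  · refine ae_orbitAverage_iff.2 fun k hk => ?_
    have hlen : l.factorial + l = k + (m + (l.factorial + l - k - m)) := by omega
    rw [hlen] at hQpos
    exact hφ.ae_pos_of_add (hφ.ae_map_pos_of_add hQpos)
  · refine mul_left_cancel₀ (Nat.cast_ne_zero.2 hM : (l.factorial : ℝ) ≠ 0) ?_
    simp only [ProbabilityMeasure.coe_mk, wordOf_blockMap]
    rw [mul_integral_comp_wordOf_orbitAverage hM (fun I => F (I.map π)) m, ← nsmul_eq_mul,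
      ← Finset.card_range l.factorial, ← Finset.sum_const, Finset.card_range]
    refine Finset.sum_congr rfl fun k hk => ?_
    rw [integral_comp_wordOf_map_iterate _ fun I => F (I.map π)]
    simp only [← wordOf_blockMap]
    exact integral_comp_wordOf_blockMap_iterate hν hQmarg F
      (add_le_add (Finset.mem_range.1 hk).le hm)
  · rw [← hQ]
    exact mul_blockPressure_le_mul_orbitAverage hφ hm hM
      (Nat.dvd_factorial (Nat.pos_of_ne_zero hm0) hm) hQpos

end FiberMeasures

section LiftingMeasures

lemma tendsto_succ_div_factorial :
    Tendsto (fun l : ℕ => ((l + 1 : ℝ) / l.factorial)) atTop (𝓝 0) := by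
  refine squeeze_zero (fun l => by positivity) (fun l => ?_)
    (FloorSemiring.tendsto_pow_div_factorial_atTop (2 : ℝ))
  gcongr
  exact_mod_cast Nat.lt_two_pow_self

lemma mul_le_add_mul_succ_div {M m l : ℕ} (hM : 0 < M) {t E b D : ℝ} (ht : (M + l) * t ≤ E)
    (hE : m * E ≤ M * b + m * (l + 1) * D) :
    m * t ≤ b + m * (D + |t|) * ((l + 1) / M) := by
  have hM' : (0 : ℝ) < M := Nat.cast_pos.2 hM
  have hexcess : -((l + 1) * |t|) ≤ l * t := by
    nlinarith [neg_abs_le t, abs_nonneg t, l.cast_nonneg (α := ℝ)]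
  have hmul : (m : ℝ) * (M * t - (l + 1) * |t|) ≤ M * b + m * (l + 1) * D :=
    (mul_le_mul_of_nonneg_left (by linarith) m.cast_nonneg).trans hE
  refine le_of_mul_le_mul_left ?_ hM'
  rw [mul_add, mul_left_comm (M : ℝ) (m * (D + |t|)), mul_div_cancel₀ _ hM'.ne']
  linarith

variable {A B : Type} [Fintype A] [TopologicalSpace A] [DiscreteTopology A] [MeasurableSpace A]
  [BorelSpace A] [Fintype B] [MeasurableSpace B] [MeasurableSingletonClass B]
  {π : A → B} {φ : List A → ℝ} {K : ℝ}

/-- The limit point exists by compactness; the number `l !` of averaged translates is divisible by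
every block length `m ≤ l`, and the length `l` by which the words exceed it is negligible. -/
lemma exists_map_blockMap_eq_and_mul_le_blockPressure (hφ : SubmultWith K φ) {ν : Measure (ℕ → B)}
    [IsProbabilityMeasure ν] (hν : ν.map shiftMap = ν) {t : ℝ}
    (ht : ∀ᶠ n in atTop, (∀ᵐ y ∂ν, 0 < fiberSum π φ (wordOf y n)) ∧
      n * t ≤ blockPressure (fiberSum π φ) ν n) :
    ∃ η : ProbabilityMeasure (ℕ → A), (η : Measure (ℕ → A)).map shiftMap = η ∧
      pushM π η = ν ∧ ∀ m : ℕ, (∀ᵐ x ∂(η : Measure (ℕ → A)), 0 < φ (wordOf x m)) ∧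
        (m ≠ 0 → m * t ≤ blockPressure φ η m + Real.log K) := by
  have hlen : Tendsto (fun l : ℕ => l.factorial + l) atTop atTop :=
    tendsto_atTop_mono (fun l => Nat.le_add_left l _) tendsto_id
  have hfin := (hlen.eventually ht).mono fun l hl =>
    (exists_orbitAverage_factorial hφ hν hl.1).imp fun P hP => And.intro hl.2 hP
  have : Nonempty (ProbabilityMeasure (ℕ → A)) := let ⟨_, P, _⟩ := hfin.exists; ⟨P⟩
  obtain ⟨P, hP⟩ := hfin.choice
  replace hP := hP.filter_mono Nat.hyperfilter_le_atTop
  obtain ⟨η, hη⟩ : ∃ η, Tendsto P (hyperfilter ℕ) (𝓝 η) :=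
    ⟨_, Ultrafilter.le_nhds_lim ((hyperfilter ℕ).map P)⟩
  have hlevel m : ∀ᶠ l in hyperfilter ℕ, m ≤ l :=
    (eventually_ge_atTop m).filter_mono Nat.hyperfilter_le_atTop
  refine ⟨η, map_shiftMap_eq_of_tendsto_orbitAverage hη
    (factorial_tendsto_atTop.mono_left Nat.hyperfilter_le_atTop) (hP.mono fun l hl => hl.2.1), ?_,
    fun m => ⟨?_, fun hm => ?_⟩⟩
  · have : IsProbabilityMeasure (pushM π η) := Measure.isProbabilityMeasure_map
      (measurable_blockMap (measurable_of_finite π)).aemeasurable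
    refine eq_of_integral_comp_wordOf_eq fun F m => ?_
    rw [pushM, integral_comp_wordOf_map_blockMap (measurable_of_finite π)]
    have hlim := tendsto_integral_comp_wordOf hη (fun I => F (I.map π)) m
    simp only [← wordOf_blockMap] at hlim
    refine tendsto_nhds_unique hlim (tendsto_const_nhds.congr' ?_)
    filter_upwards [hP, hlevel m] with l hl hml using ((hl.2.2 m hml).2.1 F).symm
  · refine ae_wordOf_mem_of_tendsto hη (S := {I | 0 < φ I}) ?_
    filter_upwards [hP, hlevel m] with l hl hml using (hl.2.2 m hml).1
  · let c := m * (Real.log K + Real.log (Fintype.card A) + |t|)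
    have hlim : Tendsto (fun l : ℕ => blockPressure φ (P l) m + Real.log K +
        c * ((l + 1 : ℝ) / l.factorial))
        (hyperfilter ℕ) (𝓝 (blockPressure φ η m + Real.log K)) := by
      simpa using ((tendsto_blockPressure hη φ m).add_const (Real.log K)).add
        ((tendsto_succ_div_factorial.mono_left Nat.hyperfilter_le_atTop).const_mul c)
    refine ge_of_tendsto hlim ?_
    filter_upwards [hP, hlevel m] with l hl hml
    exact mul_le_add_mul_succ_div l.factorial_pos (by exact_mod_cast hl.1) ((hl.2.2 m hml).2.2 hm)

end LiftingMeasures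

section RelativeVariationalPrinciple

variable {A B : Type} [MeasurableSpace A] [MeasurableSpace B] {X : Set (ℕ → A)} {Y : Set (ℕ → B)}
  {π : A → B} {φ : List A → ℝ} {η : ProbabilityMeasure (ℕ → A)} {ν : ProbabilityMeasure (ℕ → B)}

lemma exists_mem_MInv_eq_pushM (hπ : Measurable π) (hXY : Set.MapsTo (blockMap π) X Y)
    (hη : η ∈ MInv X) : ∃ ν ∈ MInv Y, (ν : Measure (ℕ → B)) = pushM π η := by
  have hmeas := measurable_blockMap hπ
  have hprob : IsProbabilityMeasure (pushM π η) :=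
    Measure.isProbabilityMeasure_map hmeas.aemeasurable
  refine ⟨⟨pushM π η, hprob⟩, ⟨?_, (prob_le_one (μ := pushM π η)).antisymm ?_⟩, rfl⟩
  · calc (pushM π η).map shiftMap
      _ = ((η : Measure (ℕ → A)).map shiftMap).map (blockMap π) := by
          rw [pushM, Measure.map_map measurable_shiftMap hmeas,
            Measure.map_map hmeas measurable_shiftMap]
          rfl
      _ = pushM π η := by rw [hη.1, pushM]
  · calc 1 = (η : Measure (ℕ → A)) X := hη.2.symm
      _ ≤ (η : Measure (ℕ → A)) (blockMap π ⁻¹' Y) := measure_mono hXY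
      _ ≤ pushM π η Y := Measure.le_map_apply hmeas.aemeasurable Y

lemma ae_mem_of_mem_MInv [Finite A] [TopologicalSpace A] [DiscreteTopology A] [BorelSpace A]
    (hX : IsClosed X) (hη : η ∈ MInv X) :
    ∀ᵐ x ∂(η : Measure (ℕ → A)), x ∈ X :=
  (mem_ae_iff_prob_eq_one hX.measurableSet).2 hη.2

variable [Fintype A]

lemma eqVal_genPot_le_eqVal_fiberSum [MeasurableSingletonClass A] [Fintype B]
    [MeasurableSingletonClass B] (hφ : ∀ I, 0 ≤ φ I) (hη : η ∈ MInv X) (hν : ν ∈ MInv Y)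
    (h : pushM π η = ν) : eqVal X (genPot φ) η ≤ eqVal Y (genPot (fiberSum π φ)) ν := by
  rw [eqVal_genPot_eq_liminf hη, eqVal_genPot_eq_liminf hν, ← h]
  refine liminf_le_liminf (.of_forall fun n => ?_)
  exact mul_le_mul_of_nonneg_left (extBlockPressure_le_map_blockMap hφ η n)
    (EReal.coe_nonneg.2 (by positivity))

variable [TopologicalSpace A] [DiscreteTopology A] [BorelSpace A]

lemma eqVal_genPot_langExt (hX : IsClosed X) (hη : η ∈ MInv X) :
    eqVal X (genPot (langExt X φ)) η = eqVal X (genPot φ) η :=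
  eqVal_congr_ae fun n => (ae_mem_of_mem_MInv hX hη).mono fun _ hx => langExt_wordOf hx n

lemma exists_mem_MInv_le_eqVal_langExt [Fintype B] [MeasurableSingletonClass B] {K : ℝ}
    (hX : IsClosed X) (hφ : SubmultWith K (langExt X φ)) (hν : ν ∈ MInv Y) {t : ℝ}
    (ht : t < eqVal Y (genPot (fiberSum π (langExt X φ))) ν) :
    ∃ η ∈ MInv X, pushM π η = ν ∧ t ≤ eqVal X (genPot (langExt X φ)) η := by
  obtain ⟨η, hinv, hmap, hη⟩ := exists_map_blockMap_eq_and_mul_le_blockPressure hφ hν.1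
    (eventually_of_lt_eqVal_genPot hν ht)
  have hlang : ∀ᵐ x ∂(η : Measure (ℕ → A)), ∀ n, Lang X (wordOf x n) :=
    ae_all_iff.2 fun n => (hη n).1.mono fun x hx => by
      by_contra hn
      exact hx.ne' (if_neg hn)
  have hηX : η ∈ MInv X := ⟨hinv, (mem_ae_iff_prob_eq_one hX.measurableSet).1
    (hlang.mono fun x hx => mem_of_forall_lang hX hx)⟩
  exact ⟨η, hηX, hmap, le_eqVal_genPot hηX (fun n _ => (hη n).1) fun n => (hη n).2⟩

/-- The relative variational principle. -/
lemma eqVal_psiProj_eq_biSup [Fintype B] [MeasurableSingletonClass B] (hX : IsClosed X)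
    (hshift : Set.MapsTo shiftMap X X) (hφ : Submult X φ) (hν : ν ∈ MInv Y) :
    eqVal Y (genPot (psiProj X π φ)) ν =
      ⨆ η ∈ {η | η ∈ MInv X ∧ pushM π η = ν}, eqVal X (genPot φ) η := by
  rw [psiProj_eq_fiberSum_langExt]
  refine le_antisymm (EReal.ge_of_forall_gt_iff_ge.1 fun t ht => ?_) (iSup₂_le fun η hη => ?_)
  · obtain ⟨K, hK⟩ := hφ.exists_submultWith hshift
    obtain ⟨η, hη, hmap, hle⟩ := exists_mem_MInv_le_eqVal_langExt hX hK hν ht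
    exact (hle.trans_eq (eqVal_genPot_langExt hX hη)).trans (le_iSup₂_of_le η ⟨hη, hmap⟩ le_rfl)
  · rw [← eqVal_genPot_langExt hX hη.1]
    exact eqVal_genPot_le_eqVal_fiberSum hφ.langExt_nonneg hη.1 hν hη.2

end RelativeVariationalPrinciple

section WeightedPressure

lemma eq_biSup_iff_of_biSup_fiber {α β γ L : Type*} [CompleteLattice L] {S : Set α} {T : Set β}
    {p : α → γ} {q : β → γ} (hp : ∀ x ∈ S, ∃ y ∈ T, q y = p x) {W : α → L} {G : β → L}
    (hG : ∀ y ∈ T, G y = ⨆ x ∈ {x | x ∈ S ∧ p x = q y}, W x) {a : α} (ha : a ∈ S) {b : β}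
    (hb : b ∈ T) (hab : q b = p a) :
    W a = ⨆ x ∈ S, W x ↔ (G b = ⨆ y ∈ T, G y) ∧ W a = G b := by
  have hle x (hx : x ∈ S) y (hy : y ∈ T) (hxy : q y = p x) : W x ≤ G y :=
    hG y hy ▸ le_iSup₂_of_le x ⟨hx, hxy.symm⟩ le_rfl
  have hsup : ⨆ y ∈ T, G y = ⨆ x ∈ S, W x := by
    refine le_antisymm (iSup₂_le fun y hy => ?_) (iSup₂_le fun x hx => ?_)
    · rw [hG y hy]
      exact iSup₂_le fun x hx => le_iSup₂_of_le x hx.1 le_rfl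
    · obtain ⟨y, hy, hxy⟩ := hp x hx
      exact le_iSup₂_of_le y hy (hle x hx y hy hxy)
  refine ⟨fun h => ?_, fun h => h.2.trans (h.1.trans hsup)⟩
  have heq : W a = G b := (hle a ha b hb hab).antisymm (h ▸ hsup ▸ le_iSup₂_of_le b hb le_rfl)
  exact ⟨heq.symm.trans (h.trans hsup.symm), heq⟩

/-- The increasing affine bijection `x ↦ a x + b` of the extended reals, for `0 < a`. -/
noncomputable def affineOrderIso {a : ℝ} (ha : 0 < a) (b : ℝ) : EReal ≃o EReal :=
  have ha' : (0 : EReal) < a := EReal.coe_pos.2 ha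
  Equiv.toOrderIso
    { toFun := fun x => a * x + b
      invFun := fun x => (x - b) / a
      left_inv := fun x => by
        dsimp only
        rw [EReal.add_sub_cancel_right, ← EReal.mul_div,
          EReal.mul_div_cancel (EReal.coe_ne_bot a) (EReal.coe_ne_top a) ha'.ne']
      right_inv := fun x => by
        dsimp only
        rw [EReal.mul_div_cancel (EReal.coe_ne_bot a) (EReal.coe_ne_top a) ha'.ne',
          EReal.sub_add_cancel] }
    (fun _ _ h => add_le_add_left (mul_le_mul_of_nonneg_left h ha'.le) _)
    (fun _ _ h => EReal.div_le_div_right_of_nonneg ha'.le (EReal.sub_le_sub h le_rfl))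

lemma affineOrderIso_mul_add {a : ℝ} (ha : 0 < a) (b c h : ℝ) (p : EReal) :
    affineOrderIso ha b (c * p + h) = (a * c : ℝ) * p + (a * h + b : ℝ) := by
  change a * (c * p + h) + (b : EReal) = _
  rw [EReal.left_distrib_of_nonneg_of_ne_top (EReal.coe_nonneg.2 ha.le) (EReal.coe_ne_top a),
    EReal.coe_add, EReal.coe_mul, EReal.coe_mul, add_assoc, mul_assoc]

variable {A B : Type} [Fintype A] [MeasurableSpace A] [Fintype B]
  [MeasurableSpace B] {X : Set (ℕ → A)} {Y : Set (ℕ → B)} {φ : List A → ℝ}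
  {μ : ProbabilityMeasure (ℕ → A)}

lemma mem_EqSet_iff_affineOrderIso {a : ℝ} (ha : 0 < a) (b : ℝ) {Φ : ℕ → (ℕ → A) → ℝ} :
    μ ∈ EqSet X Φ ↔ μ ∈ MInv X ∧ affineOrderIso ha b (eqVal X Φ μ) =
      ⨆ η ∈ MInv X, affineOrderIso ha b (eqVal X Φ η) := by
  simp only [← OrderIso.map_iSup, EmbeddingLike.apply_eq_iff_eq]
  rfl

variable [MeasurableSingletonClass A]

lemma eqVal_scPot_genPot (hφ : ∀ n, ∀ᵐ x ∂(μ : Measure (ℕ → A)), 0 ≤ φ (wordOf x n))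
    {c : ℝ} (hc : 0 < c) :
    eqVal X (scPot c (genPot φ)) μ =
      c * PhiStar (μ : Measure (ℕ → A)) (genPot φ) + (ent X (μ : Measure (ℕ → A)) : ℝ) :=
  congrArg (· + ((ent X (μ : Measure (ℕ → A)) : ℝ) : EReal)) (PhiStar_genPot_rpow hφ hc)

lemma wVal2_genPot_eq (hφ : ∀ n, ∀ᵐ x ∂(μ : Measure (ℕ → A)), 0 ≤ φ (wordOf x n))
    (π : A → B) {a₁ : ℝ} (ha₁ : 0 < a₁) (a₂ : ℝ) :
    wVal2 X Y π (genPot φ) a₁ a₂ μ =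
      affineOrderIso ha₁ (a₂ * ent Y (pushM π μ)) (eqVal X (scPot a₁⁻¹ (genPot φ)) μ) := by
  rw [eqVal_scPot_genPot hφ (inv_pos.2 ha₁), affineOrderIso_mul_add, mul_inv_cancel₀ ha₁.ne',
    EReal.coe_one, one_mul]
  rfl

lemma affineOrderIso_eqVal_scPot_rpow
    (hφ : ∀ n, ∀ᵐ x ∂(μ : Measure (ℕ → A)), 0 ≤ φ (wordOf x n)) {a₁ a₂ : ℝ} (ha₁ : 0 < a₁)
    (hs : 0 < a₁ + a₂) :
    affineOrderIso hs 0 (eqVal X (scPot (a₁ + a₂)⁻¹ (genPot fun I => φ I ^ a₁)) μ) =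
      affineOrderIso ha₁ (a₂ * ent X (μ : Measure (ℕ → A))) (eqVal X (genPot φ) μ) := by
  have hφ' n : ∀ᵐ x ∂(μ : Measure (ℕ → A)), 0 ≤ φ (wordOf x n) ^ a₁ :=
    (hφ n).mono fun x hx => Real.rpow_nonneg hx a₁
  have hone := affineOrderIso_mul_add ha₁ (a₂ * ent X (μ : Measure (ℕ → A))) 1
    (ent X (μ : Measure (ℕ → A))) (PhiStar (μ : Measure (ℕ → A)) (genPot φ))
  rw [EReal.coe_one, one_mul, mul_one] at hone
  rw [eqVal_scPot_genPot hφ' (inv_pos.2 hs), PhiStar_genPot_rpow hφ ha₁, affineOrderIso_mul_add,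
    mul_inv_cancel₀ hs.ne', EReal.coe_one, one_mul, eqVal, hone, add_zero, add_mul]

end WeightedPressure

section WeightedEquilibrium

variable {A B : Type} [Fintype A] [TopologicalSpace A] [DiscreteTopology A] [MeasurableSpace A]
  [BorelSpace A] [Fintype B] [MeasurableSpace B] {X : Set (ℕ → A)}
  {Y : Set (ℕ → B)} {π : A → B} {φ : List A → ℝ} {a₁ a₂ : ℝ} {μ : ProbabilityMeasure (ℕ → A)}
  {ν : ProbabilityMeasure (ℕ → B)}

lemma wVal2_eq_affineOrderIso_of_mem_MInv (hX : IsClosed X) (hφ : Submult X φ) (hμ : μ ∈ MInv X)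
    (ha₁ : 0 < a₁) :
    wVal2 X Y π (genPot φ) a₁ a₂ μ =
      affineOrderIso ha₁ (a₂ * ent Y (pushM π μ)) (eqVal X (scPot a₁⁻¹ (genPot φ)) μ) :=
  wVal2_genPot_eq (fun n => (ae_mem_of_mem_MInv hX hμ).mono fun _ hx => hφ.1 _ (lang_wordOf hx n))
    π ha₁ a₂

variable [MeasurableSingletonClass B]

lemma affineOrderIso_eqVal_phiTwo (hX : IsClosed X) (hshift : Set.MapsTo shiftMap X X)
    (hφ : Submult X φ) (ha₁ : 0 < a₁) (hs : 0 < a₁ + a₂) (hν : ν ∈ MInv Y) :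
    affineOrderIso hs 0 (eqVal Y (scPot (a₁ + a₂)⁻¹ (genPot (phiTwo X π φ a₁))) ν) =
      affineOrderIso ha₁ (a₂ * ent Y (ν : Measure (ℕ → B)))
        (⨆ η ∈ {η | η ∈ MInv X ∧ pushM π η = ν}, eqVal X (scPot a₁⁻¹ (genPot φ)) η) := by
  have hφ' : Submult X fun I => φ I ^ a₁⁻¹ := hφ.rpow hshift (inv_nonneg.2 ha₁.le)
  have hψ J : 0 ≤ psiProj X π (fun I => φ I ^ a₁⁻¹) J :=
    psiProj_eq_fiberSum_langExt π X ▸ fiberSum_nonneg π hφ'.langExt_nonneg J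
  rw [phiTwo_eq_psiProj_rpow,
    affineOrderIso_eqVal_scPot_rpow (fun _ => .of_forall fun _ => hψ _) ha₁,
    eqVal_psiProj_eq_biSup hX hshift hφ' hν]
  rfl

lemma affineOrderIso_eqVal_phiTwo_eq_biSup (hX : IsClosed X) (hshift : Set.MapsTo shiftMap X X)
    (hφ : Submult X φ) (ha₁ : 0 < a₁) (hs : 0 < a₁ + a₂) (hν : ν ∈ MInv Y) :
    affineOrderIso hs 0 (eqVal Y (scPot (a₁ + a₂)⁻¹ (genPot (phiTwo X π φ a₁))) ν) =
      ⨆ η ∈ {η | η ∈ MInv X ∧ pushM π η = ν}, wVal2 X Y π (genPot φ) a₁ a₂ η := by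
  rw [affineOrderIso_eqVal_phiTwo hX hshift hφ ha₁ hs hν]
  simp only [OrderIso.map_iSup]
  refine biSup_congr fun η hη => ?_
  rw [wVal2_eq_affineOrderIso_of_mem_MInv hX hφ hη.1 ha₁, hη.2]

lemma mem_CondEqSet_iff_wVal2_eq (hX : IsClosed X) (hshift : Set.MapsTo shiftMap X X)
    (hφ : Submult X φ) (ha₁ : 0 < a₁) (hs : 0 < a₁ + a₂) (hμ : μ ∈ MInv X) (hν : ν ∈ MInv Y)
    (h : (ν : Measure (ℕ → B)) = pushM π μ) :
    μ ∈ CondEqSet X π (scPot a₁⁻¹ (genPot φ)) (ν : Measure (ℕ → B)) ↔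
      wVal2 X Y π (genPot φ) a₁ a₂ μ =
        affineOrderIso hs 0 (eqVal Y (scPot (a₁ + a₂)⁻¹ (genPot (phiTwo X π φ a₁))) ν) := by
  rw [affineOrderIso_eqVal_phiTwo hX hshift hφ ha₁ hs hν,
    wVal2_eq_affineOrderIso_of_mem_MInv hX hφ hμ ha₁, h, EmbeddingLike.apply_eq_iff_eq]
  exact ⟨fun hμν => hμν.2.2, fun hmax => ⟨hμ, rfl, hmax⟩⟩

lemma mem_WEqSet2_iff_of_eq_pushM (hX : IsClosed X) (hshift : Set.MapsTo shiftMap X X)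
    (hπ : Set.MapsTo (blockMap π) X Y) (hφ : Submult X φ) (ha₁ : 0 < a₁) (hs : 0 < a₁ + a₂)
    (hμ : μ ∈ MInv X) (hν : ν ∈ MInv Y) (h : (ν : Measure (ℕ → B)) = pushM π μ) :
    μ ∈ WEqSet2 X Y π (genPot φ) a₁ a₂ ↔
      ν ∈ EqSet Y (scPot (a₁ + a₂)⁻¹ (genPot (phiTwo X π φ a₁))) ∧
        μ ∈ CondEqSet X π (scPot a₁⁻¹ (genPot φ)) (ν : Measure (ℕ → B)) := by
  have hmax := eq_biSup_iff_of_biSup_fiber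
    (fun η (hη : η ∈ MInv X) => exists_mem_MInv_eq_pushM (measurable_of_finite π) hπ hη)
    (fun ν hν => affineOrderIso_eqVal_phiTwo_eq_biSup hX hshift hφ ha₁ hs hν) hμ hν h
  rw [mem_EqSet_iff_affineOrderIso hs 0, mem_CondEqSet_iff_wVal2_eq hX hshift hφ ha₁ hs hμ hν h]
  exact ⟨fun hW => ⟨⟨hν, (hmax.1 hW.2).1⟩, (hmax.1 hW.2).2⟩,
    fun hνμ => ⟨hμ, hmax.2 ⟨hνμ.1.2, hνμ.2⟩⟩⟩

end WeightedEquilibrium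

theorem weighted_eq_states_stmt_7_general {A B : Type}
    [Fintype A] [TopologicalSpace A] [DiscreteTopology A] [MeasurableSpace A] [BorelSpace A]
    [Fintype B] [MeasurableSpace B] [MeasurableSingletonClass B]
    {X : Set (ℕ → A)} {Y : Set (ℕ → B)} (hX : IsSubshift X)
    {π : A → B} (hπ : Set.MapsTo (blockMap π) X Y)
    {a₁ a₂ : ℝ} (ha₁ : 0 < a₁) (hs : 0 < a₁ + a₂)
    {φ : List A → ℝ} (hφ : Submult X φ) (μ : ProbabilityMeasure (ℕ → A)) :
    μ ∈ WEqSet2 X Y π (genPot φ) a₁ a₂ ↔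
      ∃ ν : ProbabilityMeasure (ℕ → B), (ν : Measure (ℕ → B)) = pushM π μ ∧
        ν ∈ EqSet Y (scPot (a₁ + a₂)⁻¹ (genPot (phiTwo X π φ a₁))) ∧
        μ ∈ CondEqSet X π (scPot a₁⁻¹ (genPot φ)) (ν : Measure (ℕ → B)) := by
  have hXc := hX.2.1.isClosed
  have hshift := Set.mapsTo_iff_image_subset.2 hX.2.2
  constructor
  · intro hμ
    obtain ⟨ν, hν, h⟩ := exists_mem_MInv_eq_pushM (measurable_of_finite π) hπ hμ.1
    exact ⟨ν, h, (mem_WEqSet2_iff_of_eq_pushM hXc hshift hπ hφ ha₁ hs hμ.1 hν h).1 hμ⟩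
  · rintro ⟨ν, h, hν, hμ⟩
    exact (mem_WEqSet2_iff_of_eq_pushM hXc hshift hπ hφ ha₁ hs hμ.1 hν.1 h).2 ⟨hν, hμ⟩

/-- Corollary 3.4(i) / `cor-1.1`(i): `μ` is an `a`-weighted equilibrium state of
`Φ` iff `μ∘π⁻¹` is an equilibrium state of `(1/(a₁+a₂))Φ^{(2)}` and `μ` is a conditional
equilibrium state of `(1/a₁)Φ` with respect to `μ∘π⁻¹`. -/
theorem weighted_eq_states_stmt_7 {A B : Type}
    [Fintype A] [TopologicalSpace A] [DiscreteTopology A] [MeasurableSpace A] [BorelSpace A]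
    [Fintype B] [TopologicalSpace B] [DiscreteTopology B] [MeasurableSpace B] [BorelSpace B]
    (X : Set (ℕ → A)) (Y : Set (ℕ → B)) (hX : IsSubshift X) (hY : IsSubshift Y)
    (π : A → B) (hπ : blockMap π '' X = Y)
    (a₁ a₂ : ℝ) (ha₁ : 0 < a₁) (ha₂ : 0 ≤ a₂)
    (φ : List A → ℝ) (hφ : Submult X φ)
    (μ : ProbabilityMeasure (ℕ → A)) :
    μ ∈ WEqSet2 X Y π (genPot φ) a₁ a₂ ↔
      ∃ ν : ProbabilityMeasure (ℕ → B), (ν : Measure (ℕ → B)) = pushM π μ ∧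
        ν ∈ EqSet Y (scPot (a₁ + a₂)⁻¹ (genPot (phiTwo X π φ a₁))) ∧
        μ ∈ CondEqSet X π (scPot a₁⁻¹ (genPot φ)) (ν : Measure (ℕ → B)) :=
  weighted_eq_states_stmt_7_general hX (hπ ▸ Set.mapsTo_image _ _) ha₁
    (add_pos_of_pos_of_nonneg ha₁ ha₂) hφ μ
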